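/- arXiv:1904.05907 — 5 statements merged into one kernel-verified Lean document; each statement's English description precedes it below -/
import Mathlib

section
/- As p → ∞ one has u_p(0) → √e and ρ_p → 0. -/
open Real Set Filter MeasureTheory

open scoped Topology

/-!
In the variable `t = -log r` the flux `q = -r u'` is the slope of `u`, and it increases with `r`, so
`u` is concave in `t`. Two radii carry the argument. At the concentration radius, where
`r ^ β = β ^ 2 / (p u(0) ^ (p - 1))` and `β = 2 + α`, the function `u` still has the value
`u(0) (1 - 1 / p)`; bounding `u` there by its tangent at `r = 1`, whose slope `q(1)` is controlled
by the Pohozaev identity, gives the lower bound for `u(0)`. At `r ^ β = exp (-(p - 1) / 2)`,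
comparison with the explicit bubble gives `u(0) u(r) ≤ e (1 + o(1))`, and the chord of the concave
function through `r = 1` transports this to the concentration radius, which gives the upper bound.
-/

section Calculus

lemma sub_le_sub_of_hasDerivAt_le {f f' g g' : ℝ → ℝ} {a b : ℝ} (hab : a ≤ b)
    (hf : ContinuousOn f (Icc a b)) (hg : ContinuousOn g (Icc a b))
    (hf' : ∀ x ∈ Ioo a b, HasDerivAt f (f' x) x) (hg' : ∀ x ∈ Ioo a b, HasDerivAt g (g' x) x)
    (hle : ∀ x ∈ Ioo a b, f' x ≤ g' x) : f b - f a ≤ g b - g a := by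
  have hmono : MonotoneOn (fun x => g x - f x) (Icc a b) := by
    refine monotoneOn_of_hasDerivWithinAt_nonneg (f' := fun x => g' x - f' x) (convex_Icc a b)
      (hg.sub hf) ?_ ?_ <;> rw [interior_Icc] <;> intro x hx
    · exact ((hg' x hx).sub (hf' x hx)).hasDerivWithinAt
    · exact sub_nonneg.2 (hle x hx)
  have := hmono (left_mem_Icc.2 hab) (right_mem_Icc.2 hab) hab
  dsimp only at this
  linarith

/-- L'Hôpital's rule for `x * f x / x`. -/
lemma eq_zero_of_tendsto_mul_deriv {f f' : ℝ → ℝ} {c l : ℝ} (hf : Tendsto f (𝓝[>] 0) (𝓝 l))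
    (hf' : ∀ᶠ x in 𝓝[>] 0, HasDerivAt f (f' x) x)
    (h : Tendsto (fun x => x * f' x) (𝓝[>] 0) (𝓝 c)) : c = 0 := by
  have hid : Tendsto (fun x : ℝ => x) (𝓝[>] 0) (𝓝 0) :=
    tendsto_nhdsWithin_of_tendsto_nhds tendsto_id
  have hquot : Tendsto (fun x => x * f x / x) (𝓝[>] 0) (𝓝 (l + c)) := by
    refine HasDerivAt.lhopital_zero_nhdsGT (f' := fun x => f x + x * f' x) (g' := fun _ => 1)
      (hf'.mono fun x hx => ?_) (.of_forall hasDerivAt_id) (.of_forall fun _ => one_ne_zero)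
      (by simpa using hid.mul hf) hid (by simpa using hf.add h)
    exact ((hasDerivAt_id' x).mul hx).congr_deriv (by rw [one_mul])
  have hf_lim : Tendsto f (𝓝[>] 0) (𝓝 (l + c)) := by
    refine hquot.congr' ?_
    filter_upwards [self_mem_nhdsWithin] with x hx
    exact mul_div_cancel_left₀ _ (ne_of_gt hx)
  linarith [tendsto_nhds_unique hf hf_lim]

lemma continuousOn_const_mul_rpow {b c : ℝ} (hb : 0 ≤ b) {s : Set ℝ} :
    ContinuousOn (fun r : ℝ => c * r ^ b) s :=
  ((continuous_rpow_const hb).const_mul c).continuousOn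

lemma hasDerivAt_const_mul_rpow {b c r : ℝ} (hr : r ≠ 0) :
    HasDerivAt (fun r : ℝ => c * r ^ b) (c * (b * r ^ (b - 1))) r :=
  (hasDerivAt_rpow_const (.inl hr)).const_mul c

lemma intervalIntegrable_rpow_mul {a b : ℝ} {f : ℝ → ℝ} (ha : -1 < a) (hb : 0 ≤ b)
    (hf : ContinuousOn f (Icc 0 b)) :
    IntervalIntegrable (fun s => s ^ a * f s) volume 0 b := by
  rw [← uIcc_of_le hb] at hf
  exact (intervalIntegral.intervalIntegrable_rpow' ha).mul_continuousOn hf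

lemma continuousOn_integral_rpow_mul {a b : ℝ} {f : ℝ → ℝ} (ha : -1 < a) (hb : 0 ≤ b)
    (hf : ContinuousOn f (Icc 0 b)) :
    ContinuousOn (fun r => ∫ s in 0..r, s ^ a * f s) (Icc 0 b) := by
  rw [← uIcc_of_le hb]
  exact intervalIntegral.continuousOn_primitive_interval'
    (intervalIntegrable_rpow_mul ha hb hf) left_mem_uIcc

lemma hasDerivAt_integral_rpow_mul {a b r : ℝ} {f : ℝ → ℝ} (ha : -1 < a)
    (hf : ContinuousOn f (Icc 0 b)) (hr : r ∈ Ioo 0 b) :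
    HasDerivAt (fun r => ∫ s in 0..r, s ^ a * f s) (r ^ a * f r) r := by
  have hcont : ContinuousOn (fun s => s ^ a * f s) (Ioo 0 b) :=
    (continuousOn_id.rpow_const fun s hs => .inl hs.1.ne').mul (hf.mono Ioo_subset_Icc_self)
  refine intervalIntegral.integral_hasDerivAt_right
    ((intervalIntegrable_rpow_mul ha (hr.1.trans hr.2).le hf).mono_set ?_)
    (hcont.stronglyMeasurableAtFilter isOpen_Ioo r hr) (hcont.continuousAt (isOpen_Ioo.mem_nhds hr))
  exact uIcc_subset_uIcc_left (Icc_subset_uIcc (Ioo_subset_Icc_self hr))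

lemma differentiableAt_mul_deriv {u : ℝ → ℝ} {s : Set ℝ} {r : ℝ} (hs : IsOpen s)
    (hu : ContDiffOn ℝ 2 u s) (hr : r ∈ s) : DifferentiableAt ℝ (fun x => x * deriv u x) r :=
  differentiableAt_id.mul <| ((hu.deriv_of_isOpen hs (m := 1) (by norm_num)).differentiableOn
    one_ne_zero).differentiableAt (hs.mem_nhds hr)

lemma mul_deriv_eq_neg_of_deriv_eq {u q : ℝ → ℝ} {b : ℝ} (hb : 0 < b)
    (hu0 : ContinuousWithinAt u (Ioi 0) 0)
    (hreg : ContDiffOn ℝ 2 u (Ioo 0 b)) (hq0 : Tendsto q (𝓝[>] 0) (𝓝 0))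
    (hq : ∀ r ∈ Ioo 0 b, HasDerivAt q (-deriv (fun s => s * deriv u s) r) r) :
    ∀ r ∈ Ioo 0 b, r * deriv u r = -q r := by
  have hsum (r : ℝ) (hr : r ∈ Ioo 0 b) :
      HasDerivAt (fun s => s * deriv u s + q s) 0 r :=
    ((differentiableAt_mul_deriv isOpen_Ioo hreg hr).hasDerivAt.add (hq r hr)).congr_deriv
      (add_neg_cancel _)
  obtain ⟨c, hc⟩ := isOpen_Ioo.exists_is_const_of_deriv_eq_zero isPreconnected_Ioo
    (fun r hr => (hsum r hr).differentiableAt.differentiableWithinAt) fun r hr => (hsum r hr).deriv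
  have hc0 : c = 0 := by
    refine eq_zero_of_tendsto_mul_deriv hu0 (f' := deriv u) ?_ ?_
    · filter_upwards [Ioo_mem_nhdsGT hb] with r hr
      exact ((hreg.differentiableOn two_ne_zero).differentiableAt
        (isOpen_Ioo.mem_nhds hr)).hasDerivAt
    · have hlim := hq0.const_sub c
      rw [sub_zero] at hlim
      refine hlim.congr' ?_
      filter_upwards [Ioo_mem_nhdsGT hb] with r hr
      exact (eq_sub_of_add_eq (hc r hr)).symm
  intro r hr
  linarith [hc r hr]

end Calculus

section Limits

lemma tendsto_one_of_exp_sub_one_le {ι : Type*} {l : Filter ι} {v c : ι → ℝ}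
    (hc : Tendsto c l (𝓝 1)) (hv : ∀ᶠ i in l, 1 ≤ v i)
    (hle : ∀ᶠ i in l, exp (v i - 1) ≤ v i * c i) : Tendsto v l (𝓝 1) := by
  have hupper : Tendsto (fun i => c i + √(c i ^ 2 - 1)) l (𝓝 1) := by
    simpa using hc.add ((hc.pow 2).sub_const 1).sqrt
  refine tendsto_of_tendsto_of_tendsto_of_le_of_le' tendsto_const_nhds hupper hv ?_
  filter_upwards [hv, hle] with i hvi hlei
  have hquad := quadratic_le_exp_of_nonneg (sub_nonneg.2 hvi)
  have hsq : (v i - c i) ^ 2 ≤ c i ^ 2 - 1 := by nlinarith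
  linarith [le_sqrt_of_sq_le hsq]

lemma tendsto_rpow_two_div_sub_one : Tendsto (fun p : ℝ => p ^ (2 / (p - 1))) atTop (𝓝 1) := by
  simpa [← sub_eq_add_neg] using tendsto_rpow_div_mul_add 2 1 (-1) one_ne_zero.symm

lemma tendsto_two_div_sub_one : Tendsto (fun p : ℝ => 2 / (p - 1)) atTop (𝓝 0) :=
  (tendsto_atTop_add_const_right atTop (-1) tendsto_id).const_div_atTop 2

lemma tendsto_const_div_rpow_two_div_sub_one {b : ℝ} (hb : 0 < b) :
    Tendsto (fun p : ℝ => (b / p) ^ (2 / (p - 1))) atTop (𝓝 1) := by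
  have hconst : Tendsto (fun p : ℝ => b ^ (2 / (p - 1))) atTop (𝓝 1) := by
    simpa using tendsto_const_nhds.rpow tendsto_two_div_sub_one (.inl hb.ne')
  have hquot := hconst.div tendsto_rpow_two_div_sub_one one_ne_zero
  rw [div_one] at hquot
  refine hquot.congr' ?_
  filter_upwards [eventually_gt_atTop 0] with p hp
  exact (div_rpow hb.le hp.le _).symm

lemma tendsto_two_mul_div_sub_one_rpow_div :
    Tendsto (fun p : ℝ => (2 * p / (p - 1)) ^ (2 / (p - 1)) / (1 - 1 / p)) atTop (𝓝 1) := by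
  have hbase : Tendsto (fun p : ℝ => 2 * p / (p - 1)) atTop (𝓝 2) := by
    have := tendsto_two_div_sub_one.const_add 2
    rw [add_zero] at this
    refine this.congr' ?_
    filter_upwards [eventually_gt_atTop 1] with p hp
    have : p - 1 ≠ 0 := by linarith
    field_simp
    ring
  have hden : Tendsto (fun p : ℝ => 1 - 1 / p) atTop (𝓝 1) := by
    simpa using (tendsto_inv_atTop_zero (𝕜 := ℝ)).const_sub 1
  have hquot := (hbase.rpow tendsto_two_div_sub_one (.inl two_ne_zero)).div hden one_ne_zero
  rwa [rpow_zero, div_one] at hquot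

lemma tendsto_mul_rpow_sub_one_rpow_neg {M : ℝ → ℝ} {L c : ℝ} (hM : Tendsto M atTop (𝓝 L))
    (hL : 1 < L) (hc : 0 < c) :
    Tendsto (fun p => (p * M p ^ (p - 1)) ^ (-c)) atTop (𝓝 0) := by
  refine (tendsto_rpow_neg_atTop hc).comp (tendsto_atTop_mono' atTop ?_ tendsto_id)
  filter_upwards [hM.eventually_const_lt hL, eventually_ge_atTop 1] with p hMp hp
  exact le_mul_of_one_le_right (zero_le_one.trans hp) (one_le_rpow hMp.le (sub_nonneg.2 hp))

end Limits

/-- The positive radial Dirichlet profile `u` on the unit disc, in first-order form: `q = -r u'` is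
the flux and `q' = r ^ (β - 1) u ^ p`, where `β = 2 + α` in terms of the Hénon weight `|x| ^ α`. -/
structure HenonProfile (β p : ℝ) (u q : ℝ → ℝ) : Prop where
  continuousOn : ContinuousOn u (Icc 0 1)
  flux_continuousOn : ContinuousOn q (Icc 0 1)
  hasDerivAt : ∀ r ∈ Ioo (0 : ℝ) 1, HasDerivAt u (-(q r / r)) r
  flux_hasDerivAt : ∀ r ∈ Ioo (0 : ℝ) 1, HasDerivAt q (r ^ (β - 1) * u r ^ p) r
  flux_zero : q 0 = 0
  map_one : u 1 = 0
  pos : ∀ r ∈ Ico (0 : ℝ) 1, 0 < u r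

namespace HenonProfile

variable {β p : ℝ} {u q : ℝ → ℝ}

section Monotonicity

lemma zero_pos (h : HenonProfile β p u q) : 0 < u 0 := h.pos 0 (by simp)

lemma nonneg (h : HenonProfile β p u q) {r : ℝ} (hr : r ∈ Icc (0 : ℝ) 1) : 0 ≤ u r := by
  rcases hr.2.eq_or_lt with rfl | hr1
  · exact h.map_one.ge
  · exact (h.pos r ⟨hr.1, hr1⟩).le

lemma flux_monotoneOn (h : HenonProfile β p u q) : MonotoneOn q (Icc 0 1) := by
  refine monotoneOn_of_hasDerivWithinAt_nonneg (f' := fun r => r ^ (β - 1) * u r ^ p)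
    (convex_Icc 0 1) h.flux_continuousOn ?_ ?_ <;> rw [interior_Icc] <;> intro r hr
  · exact (h.flux_hasDerivAt r hr).hasDerivWithinAt
  · exact mul_nonneg (rpow_nonneg hr.1.le _) (rpow_nonneg (h.nonneg (Ioo_subset_Icc_self hr)) _)

lemma flux_nonneg (h : HenonProfile β p u q) {r : ℝ} (hr : r ∈ Icc (0 : ℝ) 1) : 0 ≤ q r :=
  h.flux_zero.ge.trans (h.flux_monotoneOn (by simp) hr hr.1)

lemma antitoneOn (h : HenonProfile β p u q) : AntitoneOn u (Icc 0 1) := by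
  refine antitoneOn_of_hasDerivWithinAt_nonpos (f' := fun r => -(q r / r))
    (convex_Icc 0 1) h.continuousOn ?_ ?_ <;> rw [interior_Icc] <;> intro r hr
  · exact (h.hasDerivAt r hr).hasDerivWithinAt
  · exact neg_nonpos.2 (div_nonneg (h.flux_nonneg (Ioo_subset_Icc_self hr)) hr.1.le)

end Monotonicity

section PointwiseBounds

lemma flux_le (h : HenonProfile β p u q) (hβ : 0 < β) (hp : 0 ≤ p) {r : ℝ}
    (hr : r ∈ Icc (0 : ℝ) 1) : q r ≤ u 0 ^ p / β * r ^ β := by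
  have hsub : Icc 0 r ⊆ Icc (0 : ℝ) 1 := Icc_subset_Icc_right hr.2
  have key := sub_le_sub_of_hasDerivAt_le hr.1 (h.flux_continuousOn.mono hsub)
    (continuousOn_const_mul_rpow (c := u 0 ^ p / β) hβ.le)
    (fun s hs => h.flux_hasDerivAt s ⟨hs.1, hs.2.trans_le hr.2⟩)
    (fun s hs => hasDerivAt_const_mul_rpow hs.1.ne') fun s hs => by
      have hs' := hsub (Ioo_subset_Icc_self hs)
      have hu : u s ^ p ≤ u 0 ^ p :=
        rpow_le_rpow (h.nonneg hs') (h.antitoneOn (by simp) hs' hs'.1) hp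
      calc s ^ (β - 1) * u s ^ p ≤ s ^ (β - 1) * u 0 ^ p :=
            mul_le_mul_of_nonneg_left hu (rpow_nonneg hs'.1 _)
        _ = u 0 ^ p / β * (β * s ^ (β - 1)) := by field_simp
  simpa [h.flux_zero, zero_rpow hβ.ne'] using key

lemma le_flux (h : HenonProfile β p u q) (hβ : 0 < β) (hp : 0 ≤ p) {r : ℝ}
    (hr : r ∈ Icc (0 : ℝ) 1) : u r ^ p / β * r ^ β ≤ q r := by
  have hsub : Icc 0 r ⊆ Icc (0 : ℝ) 1 := Icc_subset_Icc_right hr.2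
  have key := sub_le_sub_of_hasDerivAt_le hr.1
    (continuousOn_const_mul_rpow (c := u r ^ p / β) hβ.le) (h.flux_continuousOn.mono hsub)
    (fun s hs => hasDerivAt_const_mul_rpow hs.1.ne')
    (fun s hs => h.flux_hasDerivAt s ⟨hs.1, hs.2.trans_le hr.2⟩) fun s hs => by
      have hu : u r ^ p ≤ u s ^ p :=
        rpow_le_rpow (h.nonneg hr) (h.antitoneOn (hsub (Ioo_subset_Icc_self hs)) hr hs.2.le) hp
      calc u r ^ p / β * (β * s ^ (β - 1)) = s ^ (β - 1) * u r ^ p := by field_simp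
        _ ≤ s ^ (β - 1) * u s ^ p := mul_le_mul_of_nonneg_left hu (rpow_nonneg hs.1.le _)
  simpa [h.flux_zero, zero_rpow hβ.ne'] using key

lemma zero_sub_mul_rpow_le (h : HenonProfile β p u q) (hβ : 0 < β) (hp : 0 ≤ p) {r : ℝ}
    (hr : r ∈ Icc (0 : ℝ) 1) : u 0 - u 0 ^ p / β ^ 2 * r ^ β ≤ u r := by
  have hsub : Icc 0 r ⊆ Icc (0 : ℝ) 1 := Icc_subset_Icc_right hr.2
  have key := sub_le_sub_of_hasDerivAt_le hr.1
    (continuousOn_const_mul_rpow (c := -(u 0 ^ p / β ^ 2)) hβ.le) (h.continuousOn.mono hsub)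
    (fun s hs => hasDerivAt_const_mul_rpow hs.1.ne')
    (fun s hs => h.hasDerivAt s ⟨hs.1, hs.2.trans_le hr.2⟩) fun s hs => by
      have hs0 : 0 < s := hs.1
      calc -(u 0 ^ p / β ^ 2) * (β * s ^ (β - 1)) = -(u 0 ^ p / β * s ^ β / s) := by
            rw [rpow_sub_one hs0.ne']
            field_simp
        _ ≤ -(q s / s) := by
            have := h.flux_le hβ hp (hsub (Ioo_subset_Icc_self hs))
            gcongr
  simp only [zero_rpow hβ.ne', mul_zero] at key
  linarith

lemma sq_le_zero_rpow (h : HenonProfile β p u q) (hβ : 0 < β) (hp : 0 ≤ p) :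
    β ^ 2 ≤ u 0 ^ (p - 1) := by
  have hM := h.zero_pos
  have hle := h.zero_sub_mul_rpow_le hβ hp (r := 1) (by simp)
  rw [h.map_one, one_rpow, mul_one, sub_nonpos, le_div_iff₀ (by positivity)] at hle
  rw [rpow_sub_one hM.ne', le_div_iff₀ hM]
  linarith

end PointwiseBounds

section LogConcavity

lemma le_tangent (h : HenonProfile β p u q) {a b : ℝ} (ha : a ∈ Ioc (0 : ℝ) 1)
    (hb : b ∈ Ioc (0 : ℝ) 1) : u b ≤ u a - q a * (log b - log a) := by
  have hlog {x y : ℝ} (hx : 0 < x) : ContinuousOn (fun r => -q a * log r) (Icc x y) :=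
    (continuousOn_log.mono fun r hr => (hx.trans_le hr.1).ne').const_smul (-q a)
  have hlog' {r : ℝ} (hr : 0 < r) : HasDerivAt (fun r => -q a * log r) (-q a * r⁻¹) r :=
    (hasDerivAt_log hr.ne').const_mul (-q a)
  have hslope (r : ℝ) : -(q r / r) - -q a * r⁻¹ = (q a - q r) / r := by ring
  rcases le_total a b with hab | hab
  · have key := sub_le_sub_of_hasDerivAt_le hab
      (h.continuousOn.mono (Icc_subset_Icc ha.1.le hb.2)) (hlog ha.1)
      (fun r hr => h.hasDerivAt r ⟨ha.1.trans hr.1, hr.2.trans_le hb.2⟩)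
      (fun r hr => hlog' (ha.1.trans hr.1)) fun r hr => by
        have hr0 : 0 < r := ha.1.trans hr.1
        have hq := h.flux_monotoneOn (Ioc_subset_Icc_self ha) ⟨hr0.le, hr.2.le.trans hb.2⟩ hr.1.le
        rw [← sub_nonpos, hslope]
        exact div_nonpos_of_nonpos_of_nonneg (sub_nonpos.2 hq) hr0.le
    linarith
  · have key := sub_le_sub_of_hasDerivAt_le hab (hlog hb.1)
      (h.continuousOn.mono (Icc_subset_Icc hb.1.le ha.2)) (fun r hr => hlog' (hb.1.trans hr.1))
      (fun r hr => h.hasDerivAt r ⟨hb.1.trans hr.1, hr.2.trans_le ha.2⟩) fun r hr => by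
        have hr0 : 0 < r := hb.1.trans hr.1
        have hq := h.flux_monotoneOn ⟨hr0.le, hr.2.le.trans ha.2⟩ (Ioc_subset_Icc_self ha) hr.2.le
        rw [← sub_nonneg, hslope]
        exact div_nonneg (sub_nonneg.2 hq) hr0.le
    linarith

lemma mul_neg_log_le_mul_neg_log (h : HenonProfile β p u q) {a b : ℝ} (ha : a ∈ Ioc (0 : ℝ) 1)
    (hb : b ∈ Ioc (0 : ℝ) 1) (hba : b ≤ a) : u b * -log a ≤ u a * -log b := by
  have hone := h.le_tangent ha (b := 1) (by simp)
  have hb_le := h.le_tangent ha hb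
  have hloga : log a ≤ 0 := log_nonpos ha.1.le ha.2
  have hlog_le : log b ≤ log a := log_le_log hb.1 hba
  rw [h.map_one, log_one] at hone
  nlinarith

end LogConcavity

section Pohozaev

/-- `p + 1` times the Pohozaev functional of the radial equation. -/
noncomputable def pohozaev (β p : ℝ) (u q : ℝ → ℝ) (r : ℝ) : ℝ :=
  (p + 1) / 2 * q r ^ 2 + r ^ β * u r ^ (p + 1) - β * (u r * q r)

lemma pohozaev_continuousOn (h : HenonProfile β p u q) (hβ : 0 ≤ β) (hp : 0 ≤ p + 1) :
    ContinuousOn (pohozaev β p u q) (Icc 0 1) :=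
  ((continuousOn_const.mul (h.flux_continuousOn.pow 2)).add
    ((continuous_rpow_const hβ).continuousOn.mul
      (h.continuousOn.rpow_const fun _ _ => .inr hp))).sub
    (continuousOn_const.mul (h.continuousOn.mul h.flux_continuousOn))

lemma pohozaev_hasDerivAt (h : HenonProfile β p u q) {r : ℝ} (hr : r ∈ Ioo (0 : ℝ) 1) :
    HasDerivAt (pohozaev β p u q) (β * q r ^ 2 / r) r := by
  have hu : u r ≠ 0 := (h.pos r (Ioo_subset_Ico_self hr)).ne'
  have hr0 : r ≠ 0 := hr.1.ne'
  have hu' := h.hasDerivAt r hr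
  have hq' := h.flux_hasDerivAt r hr
  refine ((((hq'.pow 2).const_mul ((p + 1) / 2)).add
    ((hasDerivAt_rpow_const (p := β) (.inl hr0)).mul (hu'.rpow_const (p := p + 1) (.inl hu)))).sub
      ((hu'.mul hq').const_mul β)).congr_deriv ?_
  rw [rpow_sub_one hr0, add_sub_cancel_right, rpow_add_one hu]
  field_simp
  ring

lemma pohozaev_zero (h : HenonProfile β p u q) (hβ : β ≠ 0) : pohozaev β p u q 0 = 0 := by
  simp [pohozaev, h.flux_zero, zero_rpow hβ]

lemma pohozaev_one (h : HenonProfile β p u q) (hp : p + 1 ≠ 0) :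
    pohozaev β p u q 1 = (p + 1) / 2 * q 1 ^ 2 := by
  simp [pohozaev, h.map_one, zero_rpow hp]

lemma pohozaev_nonneg (h : HenonProfile β p u q) (hβ : 0 < β) (hp : 0 ≤ p + 1) {r : ℝ}
    (hr : r ∈ Icc (0 : ℝ) 1) : 0 ≤ pohozaev β p u q r := by
  have hmono : MonotoneOn (pohozaev β p u q) (Icc 0 1) := by
    refine monotoneOn_of_hasDerivWithinAt_nonneg (f' := fun r => β * q r ^ 2 / r) (convex_Icc 0 1)
      (h.pohozaev_continuousOn hβ.le hp) ?_ ?_ <;> rw [interior_Icc] <;> intro s hs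
    · exact (h.pohozaev_hasDerivAt hs).hasDerivWithinAt
    · exact div_nonneg (by positivity) hs.1.le
  exact (h.pohozaev_zero hβ.ne').ge.trans (hmono (by simp) hr hr.1)

lemma flux_one_mul_le (h : HenonProfile β p u q) (hβ : 0 < β) (hp : 0 < p + 1) :
    q 1 * (p + 1) ≤ 2 * β * u 0 := by
  have key := sub_le_sub_of_hasDerivAt_le zero_le_one (h.pohozaev_continuousOn hβ.le hp.le)
    (h.continuousOn.const_smul (-(β * q 1))) (fun r hr => h.pohozaev_hasDerivAt hr)
    (fun r hr => (h.hasDerivAt r hr).const_mul (-(β * q 1))) fun r hr => by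
      have hr' := Ioo_subset_Icc_self hr
      have hr0 : 0 < r := hr.1
      have hq : q r ≤ q 1 := h.flux_monotoneOn hr' (by simp) hr.2.le
      calc β * q r ^ 2 / r = β * (q r * q r) / r := by rw [sq]
        _ ≤ β * (q 1 * q r) / r := by
            have := h.flux_nonneg hr'
            gcongr
        _ = -(β * q 1) * -(q r / r) := by ring
  simp only [Pi.smul_apply, smul_eq_mul, h.pohozaev_zero hβ.ne', h.pohozaev_one hp.ne',
    h.map_one] at key
  rcases (h.flux_nonneg (right_mem_Icc.2 zero_le_one)).eq_or_lt with hq | hq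
  · have := h.zero_pos
    rw [← hq, zero_mul]
    positivity
  · exact le_of_mul_le_mul_left (by linarith) hq

lemma le_mul_neg_log (h : HenonProfile β p u q) (hβ : 0 < β) (hp : 0 < p + 1) {r : ℝ}
    (hr : r ∈ Ioc (0 : ℝ) 1) : u r ≤ 2 * β * u 0 / (p + 1) * -log r := by
  have htangent := h.le_tangent (a := 1) (by simp) hr
  rw [h.map_one, log_one] at htangent
  have hflux : q 1 ≤ 2 * β * u 0 / (p + 1) := (le_div_iff₀ hp).2 (h.flux_one_mul_le hβ hp)
  calc u r ≤ q 1 * -log r := by linarith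
    _ ≤ 2 * β * u 0 / (p + 1) * -log r :=
      mul_le_mul_of_nonneg_right hflux (neg_nonneg.2 (log_nonpos hr.1.le hr.2))

end Pohozaev

section BubbleComparison

/-- The ratio `q / (r ^ β u ^ ((p + 1) / 2))`, which is constant exactly on the bubbles, that is,
when `u ^ (-(p - 1) / 2)` is affine in `r ^ β`. -/
noncomputable def bubbleRatio (β p : ℝ) (u q : ℝ → ℝ) (r : ℝ) : ℝ :=
  q r * r ^ (-β) * u r ^ (-((p + 1) / 2))

lemma bubbleRatio_hasDerivAt (h : HenonProfile β p u q) {r : ℝ} (hr : r ∈ Ioo (0 : ℝ) 1) :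
    HasDerivAt (bubbleRatio β p u q)
      (r ^ (-β - 1) * u r ^ (-((p + 1) / 2) - 1) * pohozaev β p u q r) r := by
  have hu : u r ≠ 0 := (h.pos r (Ioo_subset_Ico_self hr)).ne'
  have hr0 : r ≠ 0 := hr.1.ne'
  refine (((h.flux_hasDerivAt r hr).mul (hasDerivAt_rpow_const (p := -β) (.inl hr0))).mul
    ((h.hasDerivAt r hr).rpow_const (p := -((p + 1) / 2)) (.inl hu))).congr_deriv ?_
  simp only [pohozaev, Pi.mul_apply]
  rw [rpow_sub_one hr0, rpow_sub_one hr0, rpow_sub_one hu, rpow_add_one hu]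
  field_simp
  ring

lemma bubbleRatio_monotoneOn (h : HenonProfile β p u q) (hβ : 0 < β) (hp : 0 ≤ p + 1) :
    MonotoneOn (bubbleRatio β p u q) (Ioo 0 1) := by
  refine monotoneOn_of_hasDerivWithinAt_nonneg
    (f' := fun r => r ^ (-β - 1) * u r ^ (-((p + 1) / 2) - 1) * pohozaev β p u q r)
    (convex_Ioo 0 1) (fun r hr => (h.bubbleRatio_hasDerivAt hr).continuousAt.continuousWithinAt)
    ?_ ?_ <;> rw [interior_Ioo] <;> intro r hr
  · exact (h.bubbleRatio_hasDerivAt hr).hasDerivWithinAt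
  · have hr' := Ioo_subset_Icc_self hr
    exact mul_nonneg (mul_nonneg (rpow_nonneg hr'.1 _) (rpow_nonneg (h.nonneg hr') _))
      (h.pohozaev_nonneg hβ hp hr')

lemma rpow_div_le_bubbleRatio (h : HenonProfile β p u q) (hβ : 0 < β) (hp : 0 ≤ p) {r : ℝ}
    (hr : r ∈ Ioo (0 : ℝ) 1) : u r ^ ((p - 1) / 2) / β ≤ bubbleRatio β p u q r := by
  have hu : 0 < u r := h.pos r (Ioo_subset_Ico_self hr)
  have hr0 : 0 < r := hr.1
  calc u r ^ ((p - 1) / 2) / β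
      = u r ^ p / β * r ^ β * r ^ (-β) * u r ^ (-((p + 1) / 2)) := by
        rw [show (p - 1) / 2 = p + -((p + 1) / 2) by ring, rpow_add hu, rpow_neg hr0.le]
        field_simp
    _ ≤ bubbleRatio β p u q r := by
        have := h.le_flux hβ hp (Ioo_subset_Icc_self hr)
        unfold bubbleRatio
        gcongr

lemma zero_rpow_div_le_bubbleRatio (h : HenonProfile β p u q) (hβ : 0 < β) (hp : 1 ≤ p) {r : ℝ}
    (hr : r ∈ Ioo (0 : ℝ) 1) : u 0 ^ ((p - 1) / 2) / β ≤ bubbleRatio β p u q r := by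
  have hu : Tendsto u (𝓝[>] 0) (𝓝 (u 0)) :=
    (h.continuousOn 0 (by simp)).mono_of_mem_nhdsWithin (Icc_mem_nhdsGT one_pos)
  refine le_of_tendsto ((hu.rpow_const (.inr (by linarith))).div_const β) ?_
  filter_upwards [Ioo_mem_nhdsGT hr.1] with s hs
  have hs' : s ∈ Ioo (0 : ℝ) 1 := ⟨hs.1, hs.2.trans hr.2⟩
  exact (h.rpow_div_le_bubbleRatio hβ (by linarith) hs').trans
    (h.bubbleRatio_monotoneOn hβ (by linarith) hs' hr hs.2.le)

lemma hasDerivAt_rpow_neg (h : HenonProfile β p u q) {r : ℝ} (hr : r ∈ Ioo (0 : ℝ) 1) :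
    HasDerivAt (fun s => u s ^ (-((p - 1) / 2)))
      ((p - 1) / 2 * r ^ (β - 1) * bubbleRatio β p u q r) r := by
  have hu : u r ≠ 0 := (h.pos r (Ioo_subset_Ico_self hr)).ne'
  have hr0 : 0 < r := hr.1
  refine ((h.hasDerivAt r hr).rpow_const (.inl hu)).congr_deriv ?_
  rw [bubbleRatio, rpow_sub_one hr0.ne', rpow_neg hr0.le,
    show -((p - 1) / 2) - 1 = -((p + 1) / 2) by ring]
  field_simp

lemma mul_rpow_le_rpow_neg (h : HenonProfile β p u q) (hβ : 0 < β) (hp : 1 ≤ p) {r : ℝ}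
    (hr : r ∈ Ioo (0 : ℝ) 1) :
    (p - 1) / 2 * u 0 ^ ((p - 1) / 2) / β ^ 2 * r ^ β ≤ u r ^ (-((p - 1) / 2)) := by
  have hcont : ContinuousOn (fun s => u s ^ (-((p - 1) / 2))) (Icc 0 r) :=
    (h.continuousOn.mono (Icc_subset_Icc_right hr.2.le)).rpow_const
      fun s hs => .inl (h.pos s ⟨hs.1, hs.2.trans_lt hr.2⟩).ne'
  have key := sub_le_sub_of_hasDerivAt_le hr.1.le (continuousOn_const_mul_rpow hβ.le) hcont
    (fun s hs => hasDerivAt_const_mul_rpow (c := (p - 1) / 2 * u 0 ^ ((p - 1) / 2) / β ^ 2)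
      hs.1.ne')
    (fun s hs => h.hasDerivAt_rpow_neg ⟨hs.1, hs.2.trans hr.2⟩) fun s hs => by
      have hs0 : 0 < s := hs.1
      have : 0 ≤ (p - 1) / 2 := by linarith
      calc (p - 1) / 2 * u 0 ^ ((p - 1) / 2) / β ^ 2 * (β * s ^ (β - 1))
          = (p - 1) / 2 * s ^ (β - 1) * (u 0 ^ ((p - 1) / 2) / β) := by field_simp
        _ ≤ (p - 1) / 2 * s ^ (β - 1) * bubbleRatio β p u q s := by
          have := h.zero_rpow_div_le_bubbleRatio hβ hp ⟨hs0, hs.2.trans hr.2⟩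
          gcongr
  simp only [zero_rpow hβ.ne', mul_zero, sub_zero] at key
  linarith [rpow_nonneg h.zero_pos.le (-((p - 1) / 2))]

lemma zero_mul_rpow_le (h : HenonProfile β p u q) (hβ : 0 < β) (hp : 1 < p) {r : ℝ}
    (hr : r ∈ Ioo (0 : ℝ) 1) :
    (u 0 * u r) ^ ((p - 1) / 2) ≤ 2 * β ^ 2 / (p - 1) * (r ^ β)⁻¹ := by
  have hM : 0 < u 0 := h.zero_pos
  have hu : 0 < u r := h.pos r (Ioo_subset_Ico_self hr)
  have hr0 : 0 < r := hr.1
  have hp' : 0 < p - 1 := sub_pos.2 hp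
  have hle := h.mul_rpow_le_rpow_neg hβ hp.le hr
  rw [rpow_neg hu.le, le_inv_comm₀ (by positivity) (by positivity)] at hle
  calc (u 0 * u r) ^ ((p - 1) / 2) = u 0 ^ ((p - 1) / 2) * u r ^ ((p - 1) / 2) :=
        mul_rpow hM.le hu.le
    _ ≤ u 0 ^ ((p - 1) / 2) * ((p - 1) / 2 * u 0 ^ ((p - 1) / 2) / β ^ 2 * r ^ β)⁻¹ := by gcongr
    _ = 2 * β ^ 2 / (p - 1) * (r ^ β)⁻¹ := by field_simp

end BubbleComparison

section Scales

/-- The exponential scale of radii: `r ^ β = exp (-(p - 1) t / 2)` at `r = scaledRadius β p t`. -/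
noncomputable def scaledRadius (β p t : ℝ) : ℝ := exp (-((p - 1) / (2 * β) * t))

/-- The `t` for which `scaledRadius β p t ^ β = β ^ 2 / (p * M ^ (p - 1))`, with `M` in the role of
`u 0`. At that radius the profile is still close to its maximum; it is `β ^ (2 / β)` times the
rescaling parameter `ρ` of the paper. -/
noncomputable def concentrationRate (β p M : ℝ) : ℝ :=
  2 / (p - 1) * log (p * M ^ (p - 1) / β ^ 2)

lemma log_scaledRadius (t : ℝ) : log (scaledRadius β p t) = -((p - 1) / (2 * β) * t) := log_exp _

lemma scaledRadius_rpow (hβ : β ≠ 0) (t : ℝ) :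
    scaledRadius β p t ^ β = exp (-((p - 1) / 2 * t)) := by
  rw [scaledRadius, ← exp_mul]
  congr 1
  field_simp

lemma scaledRadius_concentrationRate_rpow {M : ℝ} (hβ : β ≠ 0) (hp : 1 < p) (hM : 0 < M) :
    scaledRadius β p (concentrationRate β p M) ^ β = β ^ 2 / (p * M ^ (p - 1)) := by
  have hp' : p - 1 ≠ 0 := (sub_pos.2 hp).ne'
  rw [scaledRadius_rpow hβ, concentrationRate,
    show (p - 1) / 2 * (2 / (p - 1) * log (p * M ^ (p - 1) / β ^ 2))
      = log (p * M ^ (p - 1) / β ^ 2) by field_simp,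
    exp_neg, exp_log (by positivity), inv_div]

lemma scaledRadius_mem_Ioo (hβ : 0 < β) (hp : 1 < p) {t : ℝ} (ht : 0 < t) :
    scaledRadius β p t ∈ Ioo (0 : ℝ) 1 := by
  have : 0 < p - 1 := sub_pos.2 hp
  exact ⟨exp_pos _, exp_lt_one_iff.2 (neg_lt_zero.2 (by positivity))⟩

lemma scaledRadius_antitone (hβ : 0 ≤ β) (hp : 1 ≤ p) : Antitone (scaledRadius β p) := by
  have : 0 ≤ p - 1 := sub_nonneg.2 hp
  intro s t hst
  unfold scaledRadius
  gcongr

lemma sq_eq_exp_concentrationRate_mul {M : ℝ} (hβ : β ≠ 0) (hp : 1 < p) (hM : 0 < M) :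
    M ^ 2 = exp (concentrationRate β p M) * (β ^ 2 / p) ^ (2 / (p - 1)) := by
  have hp' : p - 1 ≠ 0 := (sub_pos.2 hp).ne'
  calc M ^ 2 = exp (2 / (p - 1) * ((p - 1) * log M)) := by
        rw [← exp_log (pow_pos hM 2), log_pow]
        congr 1
        push_cast
        field_simp
    _ = exp (concentrationRate β p M) * exp (log (β ^ 2 / p) * (2 / (p - 1))) := by
        rw [← exp_add, concentrationRate, mul_comm (log (β ^ 2 / p)), ← mul_add,
          ← log_mul (by positivity) (by positivity), ← log_rpow hM]
        congr 3
        field_simp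
    _ = _ := by rw [← rpow_def_of_pos (by positivity)]

end Scales

section Estimates

lemma concentrationRate_pos (h : HenonProfile β p u q) (hβ : 0 < β) (hp : 1 < p) :
    0 < concentrationRate β p (u 0) := by
  have hsq := h.sq_le_zero_rpow hβ (by linarith)
  refine mul_pos (div_pos two_pos (sub_pos.2 hp)) (log_pos ((one_lt_div (by positivity)).2 ?_))
  nlinarith [sq_pos_of_pos hβ]

lemma zero_mul_one_sub_le (h : HenonProfile β p u q) (hβ : 0 < β) (hp : 1 < p) :
    u 0 * (1 - 1 / p) ≤ u (scaledRadius β p (concentrationRate β p (u 0))) := by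
  have hM := h.zero_pos
  have hr := scaledRadius_mem_Ioo hβ hp (h.concentrationRate_pos hβ hp)
  have hle := h.zero_sub_mul_rpow_le hβ (by linarith) (Ioo_subset_Icc_self hr)
  rw [scaledRadius_concentrationRate_rpow hβ.ne' hp hM, rpow_sub_one hM.ne'] at hle
  refine Eq.trans_le ?_ hle
  field_simp

lemma one_le_concentrationRate (h : HenonProfile β p u q) (hβ : 0 < β) (hp : 1 < p) :
    1 ≤ concentrationRate β p (u 0) := by
  set v := concentrationRate β p (u 0)
  have hp' : 0 < p - 1 := sub_pos.2 hp
  have hr := scaledRadius_mem_Ioo hβ hp (h.concentrationRate_pos hβ hp)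
  have hpos : 0 < u 0 * (p - 1) := mul_pos h.zero_pos hp'
  have hle : u 0 * (p - 1) * p⁻¹ ≤ u 0 * (p - 1) * (v / (p + 1)) := calc
    u 0 * (p - 1) * p⁻¹ = u 0 * (1 - 1 / p) := by field_simp
    _ ≤ u (scaledRadius β p v) := h.zero_mul_one_sub_le hβ hp
    _ ≤ 2 * β * u 0 / (p + 1) * -log (scaledRadius β p v) :=
      h.le_mul_neg_log hβ (by linarith) (Ioo_subset_Ioc_self hr)
    _ = u 0 * (p - 1) * (v / (p + 1)) := by
      rw [log_scaledRadius]
      field_simp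
  have hv_ge : p⁻¹ * (p + 1) ≤ v := (le_div_iff₀ (by linarith)).1 (le_of_mul_le_mul_left hle hpos)
  have : p⁻¹ * (p + 1) = 1 + p⁻¹ := by field_simp
  linarith [inv_pos.2 (zero_lt_one.trans hp)]

lemma zero_mul_scaledRadius_one_le (h : HenonProfile β p u q) (hβ : 0 < β) (hp : 1 < p) :
    u 0 * u (scaledRadius β p 1) ≤ (2 * β ^ 2 / (p - 1)) ^ (2 / (p - 1)) * exp 1 := by
  have hp' : 0 < p - 1 := sub_pos.2 hp
  have hr := scaledRadius_mem_Ioo hβ hp one_pos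
  have hle := h.zero_mul_rpow_le hβ hp hr
  rw [scaledRadius_rpow hβ.ne', mul_one, exp_neg, inv_inv] at hle
  have hnonneg : 0 ≤ u 0 * u (scaledRadius β p 1) :=
    mul_nonneg h.zero_pos.le (h.nonneg (Ioo_subset_Icc_self hr))
  rw [← le_rpow_inv_iff_of_pos hnonneg (by positivity) (by positivity), inv_div,
    mul_rpow (by positivity) (by positivity), ← exp_mul] at hle
  rwa [show (p - 1) / 2 * (2 / (p - 1)) = 1 by field_simp] at hle

lemma le_concentrationRate_mul (h : HenonProfile β p u q) (hβ : 0 < β) (hp : 1 < p) :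
    u (scaledRadius β p (concentrationRate β p (u 0)))
      ≤ concentrationRate β p (u 0) * u (scaledRadius β p 1) := by
  have hc : 0 < (p - 1) / (2 * β) := div_pos (sub_pos.2 hp) (by positivity)
  have hchord := h.mul_neg_log_le_mul_neg_log
    (Ioo_subset_Ioc_self (scaledRadius_mem_Ioo hβ hp one_pos))
    (Ioo_subset_Ioc_self (scaledRadius_mem_Ioo hβ hp (h.concentrationRate_pos hβ hp)))
    (scaledRadius_antitone hβ.le hp.le (h.one_le_concentrationRate hβ hp))
  simp only [log_scaledRadius, neg_neg, mul_one] at hchord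
  exact le_of_mul_le_mul_left (by linarith) hc

lemma exp_concentrationRate_sub_one_le (h : HenonProfile β p u q) (hβ : 0 < β) (hp : 1 < p) :
    exp (concentrationRate β p (u 0) - 1) ≤
      concentrationRate β p (u 0) * ((2 * p / (p - 1)) ^ (2 / (p - 1)) / (1 - 1 / p)) := by
  have hp0 : 0 < p := zero_lt_one.trans hp
  have hp' : 0 < p - 1 := sub_pos.2 hp
  have hM := h.zero_pos
  have hv := h.concentrationRate_pos hβ hp
  set v := concentrationRate β p (u 0)
  have hB : 0 < (β ^ 2 / p) ^ (2 / (p - 1)) := by positivity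
  have hden : 0 < 1 - 1 / p := by
    rw [one_sub_div hp0.ne']
    positivity
  have hle : (β ^ 2 / p) ^ (2 / (p - 1)) * (exp v * (1 - 1 / p)) ≤
      (β ^ 2 / p) ^ (2 / (p - 1)) * (v * (2 * p / (p - 1)) ^ (2 / (p - 1)) * exp 1) := calc
    _ = u 0 * (u 0 * (1 - 1 / p)) := by
      rw [← mul_assoc, ← mul_assoc, ← sq, sq_eq_exp_concentrationRate_mul hβ.ne' hp hM,
        mul_comm (exp _)]
    _ ≤ u 0 * (v * u (scaledRadius β p 1)) := mul_le_mul_of_nonneg_left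
      ((h.zero_mul_one_sub_le hβ hp).trans (h.le_concentrationRate_mul hβ hp)) hM.le
    _ = v * (u 0 * u (scaledRadius β p 1)) := by ring
    _ ≤ v * ((2 * β ^ 2 / (p - 1)) ^ (2 / (p - 1)) * exp 1) :=
      mul_le_mul_of_nonneg_left (h.zero_mul_scaledRadius_one_le hβ hp) hv.le
    _ = _ := by
      rw [show 2 * β ^ 2 / (p - 1) = β ^ 2 / p * (2 * p / (p - 1)) by field_simp,
        mul_rpow (by positivity) (by positivity)]
      ring
  rw [exp_sub, div_le_iff₀ (exp_pos 1), mul_div_assoc', div_mul_eq_mul_div, le_div_iff₀ hden]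
  exact le_of_mul_le_mul_left hle hB

end Estimates

section Existence

/-- The flux is taken to be `∫₀ʳ s ^ (1 + α) u ^ p`. It differs from `-r u'` by a constant, which
vanishes because `u` is continuous at the origin. -/
lemma exists_of_radial_equation {α : ℝ} (hα : -2 < α) (hp : 0 ≤ p)
    (hcont : ContinuousOn u (Icc 0 1)) (hreg : ContDiffOn ℝ 2 u (Ioo 0 1))
    (heq : ∀ r ∈ Ioo (0 : ℝ) 1,
      deriv (fun s => s * deriv u s) r + r ^ (1 + α) * |u r| ^ (p - 1) * u r = 0)
    (hbdry : u 1 = 0) (hpos : ∀ r ∈ Ico (0 : ℝ) 1, 0 < u r) :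
    ∃ q, HenonProfile (2 + α) p u q := by
  have hα' : -1 < 1 + α := by linarith
  have hpow : ContinuousOn (fun s => u s ^ p) (Icc 0 1) := hcont.rpow_const fun _ _ => .inr hp
  have hsource (r : ℝ) (hr : r ∈ Ioo (0 : ℝ) 1) :
      r ^ (1 + α) * u r ^ p = -deriv (fun s => s * deriv u s) r := by
    have hu : 0 < u r := hpos r (Ioo_subset_Ico_self hr)
    have := heq r hr
    rw [abs_of_pos hu, mul_assoc, ← rpow_add_one hu.ne', sub_add_cancel] at this
    linarith
  set q : ℝ → ℝ := fun r => ∫ s in 0..r, s ^ (1 + α) * u s ^ p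
  have hq_cont : ContinuousOn q (Icc 0 1) :=
    continuousOn_integral_rpow_mul hα' zero_le_one hpow
  have hq_deriv (r : ℝ) (hr : r ∈ Ioo (0 : ℝ) 1) : HasDerivAt q (r ^ (1 + α) * u r ^ p) r :=
    hasDerivAt_integral_rpow_mul hα' hpow hr
  have hq_zero : q 0 = 0 := intervalIntegral.integral_same
  have hIcc : Icc (0 : ℝ) 1 ∈ 𝓝[>] 0 := Icc_mem_nhdsGT one_pos
  have hq_lim : Tendsto q (𝓝[>] 0) (𝓝 0) := by
    simpa [ContinuousWithinAt, hq_zero] using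
      (hq_cont 0 (by simp)).mono_of_mem_nhdsWithin hIcc
  have hflux := mul_deriv_eq_neg_of_deriv_eq one_pos
    ((hcont 0 (by simp)).mono_of_mem_nhdsWithin hIcc) hreg hq_lim
    fun r hr => hsource r hr ▸ hq_deriv r hr
  refine ⟨q, hcont, hq_cont, fun r hr => ?_, fun r hr => ?_, hq_zero, hbdry, hpos⟩
  · have hu' := ((hreg.differentiableOn two_ne_zero).differentiableAt
      (isOpen_Ioo.mem_nhds hr)).hasDerivAt
    rwa [eq_div_of_mul_eq hr.1.ne' ((mul_comm _ _).trans (hflux r hr)), neg_div] at hu'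
  · rw [show 2 + α - 1 = 1 + α by ring]
    exact hq_deriv r hr

end Existence

end HenonProfile

theorem henon_positive_asymptotics_general
    (α : ℝ) (hα : -2 < α) (u : ℝ → ℝ → ℝ) (ρ : ℝ → ℝ)
    (hcont : ∀ p : ℝ, 1 < p → ContinuousOn (u p) (Icc 0 1))
    (hreg : ∀ p : ℝ, 1 < p → ContDiffOn ℝ 2 (u p) (Ioo 0 1))
    (heq : ∀ p : ℝ, 1 < p → ∀ r ∈ Ioo (0 : ℝ) 1,
      deriv (fun s => s * deriv (u p) s) r + r ^ (1 + α) * |u p r| ^ (p - 1) * u p r = 0)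
    (hbdry : ∀ p : ℝ, 1 < p → u p 1 = 0)
    (hpos : ∀ p : ℝ, 1 < p → ∀ r ∈ Ico (0 : ℝ) 1, 0 < u p r)
    (hρ : ∀ p : ℝ, ρ p = (p * u p 0 ^ (p - 1)) ^ (-(1 / (2 + α)))) :
    Tendsto (fun p => u p 0) atTop (𝓝 √(exp 1)) ∧ Tendsto ρ atTop (𝓝 0) := by
  have hβ : 0 < 2 + α := by linarith
  have hprofile (p : ℝ) (hp : 1 < p) : ∃ q, HenonProfile (2 + α) p (u p) q :=
    HenonProfile.exists_of_radial_equation hα (by linarith) (hcont p hp) (hreg p hp) (heq p hp)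
      (hbdry p hp) (hpos p hp)
  have hrate : Tendsto (fun p => HenonProfile.concentrationRate (2 + α) p (u p 0)) atTop (𝓝 1) := by
    refine tendsto_one_of_exp_sub_one_le tendsto_two_mul_div_sub_one_rpow_div ?_ ?_ <;>
      filter_upwards [eventually_gt_atTop 1] with p hp <;> obtain ⟨q, hq⟩ := hprofile p hp
    · exact hq.one_le_concentrationRate hβ hp
    · exact hq.exp_concentrationRate_sub_one_le hβ hp
  have hmax : Tendsto (fun p => u p 0) atTop (𝓝 √(exp 1)) := by
    have hsq := (hrate.rexp.mul (tendsto_const_div_rpow_two_div_sub_one (sq_pos_of_pos hβ))).sqrt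
    rw [mul_one] at hsq
    refine hsq.congr' ?_
    filter_upwards [eventually_gt_atTop 1] with p hp
    have hM : 0 < u p 0 := hpos p hp 0 (by simp)
    rw [← HenonProfile.sq_eq_exp_concentrationRate_mul hβ.ne' hp hM, sqrt_sq hM.le]
  have hsqrt : 1 < √(exp 1) := by simp [lt_sqrt]
  exact ⟨hmax, (tendsto_mul_rpow_sub_one_rpow_neg hmax hsqrt (by positivity)).congr
    fun p => (hρ p).symm⟩

/-- Let `u p` be the positive least-energy radial solution of the Hénon
problem in the unit disc (radial profile form). As `p → ∞`, `u p 0 → √e` and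
`ρ p = (p · u p 0 ^ (p-1))^(-1/(2+α)) → 0`. -/
theorem henon_positive_asymptotics
    (α : ℝ) (hα : 0 ≤ α) (u : ℝ → ℝ → ℝ) (ρ : ℝ → ℝ)
    (hreg1 : ∀ p : ℝ, 1 < p → ContDiffOn ℝ 1 (u p) (Icc 0 1))
    (hreg2 : ∀ p : ℝ, 1 < p → ContDiffOn ℝ 2 (u p) (Ioo 0 1))
    (heq : ∀ p : ℝ, 1 < p → ∀ r ∈ Ioo (0:ℝ) 1,
      deriv (fun s => s * deriv (u p) s) r + r ^ (1 + α) * |u p r| ^ (p - 1) * u p r = 0)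
    (hderiv0 : ∀ p : ℝ, 1 < p → deriv (u p) 0 = 0)
    (hbdry : ∀ p : ℝ, 1 < p → u p 1 = 0)
    (hpos : ∀ p : ℝ, 1 < p → ∀ r ∈ Ico (0:ℝ) 1, 0 < u p r)
    (hρ : ∀ p : ℝ, ρ p = (p * u p 0 ^ (p - 1)) ^ (-(1 / (2 + α)))) :
    Tendsto (fun p => u p 0) atTop (nhds (Real.sqrt (Real.exp 1))) ∧
      Tendsto ρ atTop (nhds 0) :=
  henon_positive_asymptotics_general α (by linarith) u ρ (fun p hp => (hreg1 p hp).continuousOn)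
    hreg2 heq hbdry hpos hρ
end

section
/- Define the rescaled functions ũ_p(r) := p·(u_p(ρ_p·r) − u_p(0))/u_p(0), which are defined for 0 ≤ r < 1/ρ_p, and let U(r) := log( 4(2+α)⁴ / (2(2+α)² + r^{2+α})² ). Then ũ_p converges to U in C¹_loc([0,∞)) as p → ∞; that is, for every compact set K ⊂ [0,∞) there is p_K such that K ⊂ [0, 1/ρ_p) for all p > p_K, and sup_{r∈K} |ũ_p(r) − U(r)| → 0 and sup_{r∈K} |ũ_p′(r) − U′(r)| → 0 as p → ∞. -/
open Real Set Filter MeasureTheory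

open scoped Topology

/-!
In the variable `φ = r ^ (2 + α) / (2 + α) ^ 2` both the limit profile `U = -2 log (1 + φ / 2)` and
the barrier `exp (2 φ)` are explicit. The rescaled solution `w` satisfies `w(0) = 0` and
`(r w')' = -r ^ (1 + α) (1 + w / p) ^ p` with `0 ≤ (1 + w / p) ^ p ≤ 1`, so comparison with `φ`
gives `-φ ≤ w ≤ 0`. As `w = -p` at the end `1 / ρ` of its domain, `φ(1 / ρ) ≥ p` and the domain
exhausts `[0, ∞)`. On `[0, R]` the nonlinearity differs from `exp w` by at most
`ε = φ(R) ^ 2 / (p - φ(R))`, hence `d = w - U` satisfies `|(r d')'| ≤ r ^ (1 + α) (ε + |d|)`. The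
barrier, whose `(r · ')'` is at least `2 r ^ (1 + α)` times itself, turns this into
`|d| ≤ ε exp (2 φ)` and `|d'| ≤ ε (exp (2 φ))'`.
-/

/-! ### The radial equation `(r v')' = q` -/

/-- `v` solves the radial Poisson equation `(r v')' = q` on `(0, R)`, is continuous on `[0, R]`, and
has no logarithmic singularity at the origin: at `r = 0` the expression `r v'` is `0` whatever
`deriv v 0` is, so its continuity there says `r v' → 0`. -/
structure SolvesRadialODE (v q : ℝ → ℝ) (R : ℝ) : Prop where
  continuousOn : ContinuousOn v (Icc 0 R)
  differentiableOn : DifferentiableOn ℝ v (Ioo 0 R)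
  continuousOn_flux : ContinuousOn (fun r => r * deriv v r) (Ico 0 R)
  hasDerivAt_flux : ∀ r ∈ Ioo 0 R, HasDerivAt (fun r => r * deriv v r) (q r) r

lemma deriv_rescale (v : ℝ → ℝ) (c k ρ r : ℝ) :
    deriv (fun r => c * (v (ρ * r) - k)) r = c * (ρ * deriv v (ρ * r)) := by
  rw [deriv_const_mul_field, deriv_sub_const, deriv_comp_mul_left, smul_eq_mul]

namespace SolvesRadialODE

variable {v w p q : ℝ → ℝ} {R ρ : ℝ}

lemma hasDerivAt (h : SolvesRadialODE v q R) {r : ℝ} (hr : r ∈ Ioo 0 R) :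
    HasDerivAt v (deriv v r) r :=
  (h.differentiableOn.differentiableAt (isOpen_Ioo.mem_nhds hr)).hasDerivAt

lemma of_flux {Φ : ℝ → ℝ} (hv : ContinuousOn v (Icc 0 R)) (hΦ : ContinuousOn Φ (Ico 0 R))
    (hΦ0 : Φ 0 = 0) (hv' : ∀ r ∈ Ioo 0 R, HasDerivAt v (Φ r / r) r)
    (hΦ' : ∀ r ∈ Ioo 0 R, HasDerivAt Φ (q r) r) : SolvesRadialODE v q R := by
  have flux_eq : EqOn (fun r => r * deriv v r) Φ (Ioo 0 R) := fun r hr => by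
    simp only [(hv' r hr).deriv, mul_div_cancel₀ _ hr.1.ne']
  refine ⟨hv, fun r hr => (hv' r hr).differentiableAt.differentiableWithinAt,
    hΦ.congr fun r hr => ?_,
    fun r hr => (hΦ' r hr).congr_of_eventuallyEq (flux_eq.eventuallyEq_of_mem
      (isOpen_Ioo.mem_nhds hr))⟩
  rcases hr.1.eq_or_lt with rfl | hr0
  · simp [hΦ0]
  · exact flux_eq ⟨hr0, hr.2⟩

lemma congr_right (h : SolvesRadialODE v p R) (hpq : EqOn p q (Ioo 0 R)) :
    SolvesRadialODE v q R where
  __ := h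
  hasDerivAt_flux := fun r hr => hpq hr ▸ h.hasDerivAt_flux r hr

lemma mono {S : ℝ} (h : SolvesRadialODE v q R) (hSR : S ≤ R) : SolvesRadialODE v q S where
  continuousOn := h.continuousOn.mono (Icc_subset_Icc_right hSR)
  differentiableOn := h.differentiableOn.mono (Ioo_subset_Ioo_right hSR)
  continuousOn_flux := h.continuousOn_flux.mono (Ico_subset_Ico_right hSR)
  hasDerivAt_flux := fun r hr => h.hasDerivAt_flux r (Ioo_subset_Ioo_right hSR hr)

lemma sub (hv : SolvesRadialODE v p R) (hw : SolvesRadialODE w q R) :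
    SolvesRadialODE (fun r => v r - w r) (fun r => p r - q r) R := by
  refine of_flux (hv.continuousOn.sub hw.continuousOn)
    (hv.continuousOn_flux.sub hw.continuousOn_flux) (by simp) (fun r hr => ?_)
    fun r hr => (hv.hasDerivAt_flux r hr).sub (hw.hasDerivAt_flux r hr)
  refine ((hv.hasDerivAt hr).sub (hw.hasDerivAt hr)).congr_deriv ?_
  have := hr.1.ne'
  simp only [Pi.sub_apply]
  field_simp

lemma rescale (h : SolvesRadialODE v q R) (hρ : 0 < ρ) (c k : ℝ) :
    SolvesRadialODE (fun r => c * (v (ρ * r) - k)) (fun r => c * (ρ * q (ρ * r))) (R / ρ) := by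
  have mapsTo_Ioo : MapsTo (ρ * ·) (Ioo 0 (R / ρ)) (Ioo 0 R) := fun r hr =>
    ⟨mul_pos hρ hr.1, (lt_div_iff₀' hρ).1 hr.2⟩
  have mapsTo_Ico : MapsTo (ρ * ·) (Ico 0 (R / ρ)) (Ico 0 R) := fun r hr =>
    ⟨mul_nonneg hρ.le hr.1, (lt_div_iff₀' hρ).1 hr.2⟩
  have mapsTo_Icc : MapsTo (ρ * ·) (Icc 0 (R / ρ)) (Icc 0 R) := fun r hr =>
    ⟨mul_nonneg hρ.le hr.1, (le_div_iff₀' hρ).1 hr.2⟩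
  have flux_eq : (fun r => r * deriv (fun r => c * (v (ρ * r) - k)) r)
      = fun r => c * ((ρ * r) * deriv v (ρ * r)) := by
    funext r
    rw [deriv_rescale]
    ring
  have hmul (r : ℝ) : HasDerivAt (ρ * ·) ρ r := by simpa using (hasDerivAt_id r).const_mul ρ
  refine ⟨?_, fun r hr => ?_, ?_, fun r hr => ?_⟩
  · exact continuousOn_const.mul
      ((h.continuousOn.comp (by fun_prop) mapsTo_Icc).sub continuousOn_const)
  · exact ((((h.hasDerivAt (mapsTo_Ioo hr)).comp r (hmul r)).sub_const k).const_mul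
      c).differentiableAt.differentiableWithinAt
  · rw [flux_eq]
    exact continuousOn_const.mul (h.continuousOn_flux.comp (by fun_prop) mapsTo_Ico)
  · rw [flux_eq, mul_comm ρ]
    exact ((h.hasDerivAt_flux _ (mapsTo_Ioo hr)).comp r (hmul r)).const_mul c

lemma const_mul (h : SolvesRadialODE v q R) (c : ℝ) :
    SolvesRadialODE (fun r => c * v r) (fun r => c * q r) R := by
  simpa using h.rescale one_pos c 0

lemma deriv_nonneg (h : SolvesRadialODE v q R) (hq : ∀ r ∈ Ioo 0 R, 0 ≤ q r) {r : ℝ}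
    (hr : r ∈ Ioo 0 R) : 0 ≤ deriv v r := by
  have flux_monotone : MonotoneOn (fun r => r * deriv v r) (Ico 0 R) := by
    refine monotoneOn_of_deriv_nonneg (convex_Ico 0 R) h.continuousOn_flux ?_ ?_ <;>
      rw [interior_Ico]
    · exact fun s hs => (h.hasDerivAt_flux s hs).differentiableAt.differentiableWithinAt
    · exact fun s hs => (h.hasDerivAt_flux s hs).deriv.symm ▸ hq s hs
  have flux_nonneg : 0 * deriv v 0 ≤ r * deriv v r :=
    flux_monotone ⟨le_rfl, hr.1.trans hr.2⟩ (Ioo_subset_Ico_self hr) hr.1.le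
  rw [zero_mul] at flux_nonneg
  exact nonneg_of_mul_nonneg_right flux_nonneg hr.1

lemma monotoneOn (h : SolvesRadialODE v q R) (hq : ∀ r ∈ Ioo 0 R, 0 ≤ q r) :
    MonotoneOn v (Icc 0 R) := by
  refine monotoneOn_of_deriv_nonneg (convex_Icc 0 R) h.continuousOn ?_ ?_ <;> rw [interior_Icc]
  · exact h.differentiableOn
  · exact fun r hr => h.deriv_nonneg hq hr

lemma antitoneOn (h : SolvesRadialODE v q R) (hq : ∀ r ∈ Ioo 0 R, q r ≤ 0) :
    AntitoneOn v (Icc 0 R) := fun a ha b hb hab => by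
  have := (h.const_mul (-1)).monotoneOn (fun r hr => by linarith [hq r hr]) ha hb hab
  linarith

lemma deriv_le_deriv (hv : SolvesRadialODE v p R) (hw : SolvesRadialODE w q R)
    (hpq : ∀ r ∈ Ioo 0 R, p r ≤ q r) {r : ℝ} (hr : r ∈ Ioo 0 R) : deriv v r ≤ deriv w r := by
  have := (hw.sub hv).deriv_nonneg (fun s hs => sub_nonneg.2 (hpq s hs)) hr
  rwa [deriv_fun_sub (hw.hasDerivAt hr).differentiableAt (hv.hasDerivAt hr).differentiableAt,
    sub_nonneg] at this

lemma sub_le_sub (hv : SolvesRadialODE v p R) (hw : SolvesRadialODE w q R)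
    (hpq : ∀ r ∈ Ioo 0 R, p r ≤ q r) {r : ℝ} (hr : r ∈ Icc 0 R) : v r - v 0 ≤ w r - w 0 := by
  have := (hw.sub hv).monotoneOn (fun s hs => sub_nonneg.2 (hpq s hs))
    (left_mem_Icc.2 (hr.1.trans hr.2)) hr hr.1
  linarith

lemma abs_deriv_le (hv : SolvesRadialODE v p R) (hw : SolvesRadialODE w q R)
    (hpq : ∀ r ∈ Ioo 0 R, |p r| ≤ q r) {r : ℝ} (hr : r ∈ Ioo 0 R) :
    |deriv v r| ≤ deriv w r := by
  have upper := hv.deriv_le_deriv hw (fun s hs => (abs_le.1 (hpq s hs)).2) hr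
  have lower := (hw.const_mul (-1)).deriv_le_deriv hv
    (fun s hs => by linarith [(abs_le.1 (hpq s hs)).1]) hr
  rw [deriv_const_mul_field] at lower
  exact abs_le.2 ⟨by linarith, upper⟩

lemma abs_sub_le_sub (hv : SolvesRadialODE v p R) (hw : SolvesRadialODE w q R)
    (hpq : ∀ r ∈ Ioo 0 R, |p r| ≤ q r) {r : ℝ} (hr : r ∈ Icc 0 R) :
    |v r - v 0| ≤ w r - w 0 := by
  have upper := hv.sub_le_sub hw (fun s hs => (abs_le.1 (hpq s hs)).2) hr
  have lower := (hw.const_mul (-1)).sub_le_sub hv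
    (fun s hs => by linarith [(abs_le.1 (hpq s hs)).1]) hr
  exact abs_le.2 ⟨by linarith, upper⟩

end SolvesRadialODE

/-! ### Functions of the radial potential -/

/-- The radial solution `φ` of `Δφ = |x| ^ α` in the plane with `φ(0) = 0`. -/
noncomputable def henonPotential (α r : ℝ) : ℝ := r ^ (2 + α) / (2 + α) ^ 2

/-- The supersolution `exp (2 φ)` which replaces Grönwall's inequality for the singular operator
`(r v')'`. -/
noncomputable def henonBarrier (α r : ℝ) : ℝ := exp (2 * henonPotential α r)

/-- The limit profile `U`, the entire radial solution of `-ΔU = |x| ^ α exp U` with `U(0) = 0`. -/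
noncomputable def liouvilleProfile (α r : ℝ) : ℝ :=
  log (4 * (2 + α) ^ 4 / (2 * (2 + α) ^ 2 + r ^ (2 + α)) ^ 2)

section Potential

variable {α r R : ℝ}

lemma henonPotential_zero (hα : -2 < α) : henonPotential α 0 = 0 := by
  rw [henonPotential, zero_rpow (by linarith), zero_div]

lemma henonPotential_nonneg (hr : 0 ≤ r) : 0 ≤ henonPotential α r :=
  div_nonneg (rpow_nonneg hr _) (sq_nonneg _)

lemma henonPotential_le_henonPotential (hα : -2 < α) (hr : 0 ≤ r) (hrR : r ≤ R) :
    henonPotential α r ≤ henonPotential α R := by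
  have : 0 ≤ 2 + α := by linarith
  unfold henonPotential
  gcongr

lemma continuous_henonPotential (hα : -2 < α) : Continuous (henonPotential α) :=
  (continuous_rpow_const (by linarith)).div_const _

lemma hasDerivAt_henonPotential (hα : -2 < α) (hr : r ≠ 0 ∨ 1 ≤ 2 + α) :
    HasDerivAt (henonPotential α) (r ^ (1 + α) / (2 + α)) r := by
  have : 2 + α ≠ 0 := by linarith
  refine ((hasDerivAt_rpow_const hr).div_const ((2 + α) ^ 2)).congr_deriv ?_
  rw [show 2 + α - 1 = 1 + α by ring]
  field_simp

lemma mul_rpow_one_add_eq (hα : -2 < α) (hr : 0 < r) :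
    r * r ^ (1 + α) = (2 + α) ^ 2 * henonPotential α r := by
  have : 2 + α ≠ 0 := by linarith
  rw [henonPotential, mul_div_cancel₀ _ (pow_ne_zero 2 this), ← rpow_one_add' hr.le (by linarith)]
  ring_nf

lemma solvesRadialODE_comp_henonPotential {h h' h'' : ℝ → ℝ} (hα : -2 < α)
    (hh : ∀ t, 0 ≤ t → HasDerivAt h (h' t) t) (hh' : ∀ t, 0 ≤ t → HasDerivAt h' (h'' t) t)
    (R : ℝ) :
    SolvesRadialODE (fun r => h (henonPotential α r)) (fun r => r ^ (1 + α) *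
      (h' (henonPotential α r) + henonPotential α r * h'' (henonPotential α r))) R := by
  have hα0 : 2 + α ≠ 0 := by linarith
  have hφ := continuous_henonPotential hα
  have continuousOn_comp {g g' : ℝ → ℝ} {s : Set ℝ} (hs : s ⊆ Ici 0)
      (hg : ∀ t, 0 ≤ t → HasDerivAt g (g' t) t) :
      ContinuousOn (fun r => g (henonPotential α r)) s := fun r hr =>
    ((hg _ (henonPotential_nonneg (hs hr))).continuousAt.comp hφ.continuousAt).continuousWithinAt
  refine SolvesRadialODE.of_flux
    (Φ := fun r => (2 + α) * (henonPotential α r * h' (henonPotential α r)))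
    (continuousOn_comp Icc_subset_Ici_self hh)
    (continuousOn_const.mul (hφ.continuousOn.mul (continuousOn_comp Ico_subset_Ici_self hh')))
    (by simp [henonPotential_zero hα]) (fun r hr => ?_) fun r hr => ?_
  all_goals
    have hφ' := hasDerivAt_henonPotential hα (Or.inl hr.1.ne')
    have hφ0 := henonPotential_nonneg (α := α) hr.1.le
  · refine ((hh _ hφ0).comp r hφ').congr_deriv ?_
    have := hr.1.ne'
    field_simp
    linear_combination h' (henonPotential α r) * mul_rpow_one_add_eq hα hr.1
  · refine ((hφ'.mul ((hh' _ hφ0).comp r hφ')).const_mul (2 + α)).congr_deriv ?_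
    simp only [Function.comp_apply]
    field_simp

lemma solvesRadialODE_henonPotential (hα : -2 < α) (R : ℝ) :
    SolvesRadialODE (henonPotential α) (fun r => r ^ (1 + α)) R := by
  simpa using solvesRadialODE_comp_henonPotential hα (fun t _ => hasDerivAt_id t)
    (fun t _ => hasDerivAt_const t 1) R

lemma hasDerivAt_exp_two_mul (t : ℝ) :
    HasDerivAt (fun t => exp (2 * t)) (2 * exp (2 * t)) t := by
  simpa [mul_comm] using ((hasDerivAt_id t).const_mul 2).exp

lemma solvesRadialODE_henonBarrier (hα : -2 < α) (R : ℝ) :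
    SolvesRadialODE (henonBarrier α)
      (fun r => r ^ (1 + α) * ((2 + 4 * henonPotential α r) * henonBarrier α r)) R := by
  refine (solvesRadialODE_comp_henonPotential hα (fun t _ => hasDerivAt_exp_two_mul t)
    (fun t _ => (hasDerivAt_exp_two_mul t).const_mul 2) R).congr_right fun r _ => ?_
  simp only [henonBarrier]
  ring

lemma henonBarrier_zero (hα : -2 < α) : henonBarrier α 0 = 1 := by
  rw [henonBarrier, henonPotential_zero hα, mul_zero, exp_zero]

lemma henonBarrier_pos (α r : ℝ) : 0 < henonBarrier α r := exp_pos _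

lemma one_le_henonBarrier (hr : 0 ≤ r) : 1 ≤ henonBarrier α r :=
  one_le_exp (mul_nonneg zero_le_two (henonPotential_nonneg hr))

lemma henonBarrier_le_henonBarrier (hα : -2 < α) (hr : 0 ≤ r) (hrR : r ≤ R) :
    henonBarrier α r ≤ henonBarrier α R :=
  exp_le_exp.2 (mul_le_mul_of_nonneg_left (henonPotential_le_henonPotential hα hr hrR) zero_le_two)

lemma deriv_henonBarrier (hα : -2 < α) (hr : r ≠ 0) :
    deriv (henonBarrier α) r = 2 / (2 + α) * r ^ (1 + α) * henonBarrier α r := by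
  refine (((hasDerivAt_exp_two_mul _).comp r
    (hasDerivAt_henonPotential hα (Or.inl hr))).congr_deriv ?_).deriv
  simp only [henonBarrier]
  ring

lemma liouvilleProfile_eq (hα : -2 < α) :
    liouvilleProfile α r = -2 * log (1 + henonPotential α r / 2) := by
  have hα0 : 2 + α ≠ 0 := by linarith
  have : 4 * (2 + α) ^ 4 / (2 * (2 + α) ^ 2 + r ^ (2 + α)) ^ 2
      = ((1 + henonPotential α r / 2) ^ 2)⁻¹ := by
    rw [henonPotential, inv_eq_one_div, show 1 + r ^ (2 + α) / (2 + α) ^ 2 / 2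
      = (2 * (2 + α) ^ 2 + r ^ (2 + α)) / (2 * (2 + α) ^ 2) by field_simp, div_pow, one_div_div]
    ring
  rw [liouvilleProfile, this, log_inv, log_pow]
  push_cast
  ring

lemma exp_liouvilleProfile (hα : -2 < α) (hr : 0 ≤ r) :
    exp (liouvilleProfile α r) = ((1 + henonPotential α r / 2) ^ 2)⁻¹ := by
  have : 0 < 1 + henonPotential α r / 2 := by linarith [henonPotential_nonneg (α := α) hr]
  rw [liouvilleProfile_eq hα, neg_mul, exp_neg, two_mul, exp_add, exp_log this, sq]

lemma liouvilleProfile_zero (hα : -2 < α) : liouvilleProfile α 0 = 0 := by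
  simp [liouvilleProfile_eq hα, henonPotential_zero hα]

lemma liouvilleProfile_nonpos (hα : -2 < α) (hr : 0 ≤ r) : liouvilleProfile α r ≤ 0 := by
  have : 0 ≤ log (1 + henonPotential α r / 2) :=
    log_nonneg (by linarith [henonPotential_nonneg (α := α) hr])
  linarith [liouvilleProfile_eq (r := r) hα]

lemma hasDerivAt_neg_two_mul_log {t : ℝ} (ht : 0 ≤ t) :
    HasDerivAt (fun t => -2 * log (1 + t / 2)) (-(1 + t / 2)⁻¹) t := by
  have : 1 + t / 2 ≠ 0 := by positivity
  refine (((((hasDerivAt_id t).div_const 2).const_add 1).log this).const_mul (-2)).congr_deriv ?_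
  simp only [id_eq]
  field_simp

lemma deriv_liouvilleProfile_zero (hα : -1 < α) : deriv (liouvilleProfile α) 0 = 0 := by
  have hα2 : -2 < α := by linarith
  have hφ := hasDerivAt_henonPotential (r := 0) hα2 (Or.inr (by linarith))
  rw [zero_rpow (by linarith), zero_div] at hφ
  rw [show liouvilleProfile α = _ from funext fun r => liouvilleProfile_eq hα2]
  exact (((hasDerivAt_neg_two_mul_log (henonPotential_nonneg le_rfl)).comp 0 hφ).congr_deriv
    (mul_zero _)).deriv

lemma solvesRadialODE_liouvilleProfile (hα : -2 < α) (R : ℝ) :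
    SolvesRadialODE (liouvilleProfile α)
      (fun r => -(r ^ (1 + α) * exp (liouvilleProfile α r))) R := by
  have deriv_neg_inv (t : ℝ) (ht : 0 ≤ t) :
      HasDerivAt (fun t => -(1 + t / 2)⁻¹) (1 / 2 / (1 + t / 2) ^ 2) t := by
    have : 1 + t / 2 ≠ 0 := by positivity
    refine ((((hasDerivAt_id t).div_const 2).const_add 1).inv this).neg.congr_deriv ?_
    simp only [id_eq, neg_div, neg_neg]
  have hU := solvesRadialODE_comp_henonPotential hα (fun _ => hasDerivAt_neg_two_mul_log)
    deriv_neg_inv R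
  simp only [← liouvilleProfile_eq hα] at hU
  refine hU.congr_right fun r hr => ?_
  have : 0 < 1 + henonPotential α r / 2 := by
    linarith [henonPotential_nonneg (α := α) hr.1.le]
  simp only [exp_liouvilleProfile hα hr.1.le]
  field_simp
  ring

end Potential

/-! ### Stability -/

lemma abs_source_le_of_abs_le_mul_henonBarrier {α ε A R : ℝ} {d q : ℝ → ℝ} (hε : 0 ≤ ε) (hA : 0 ≤ A)
    (hq : ∀ r ∈ Ioo 0 R, |q r| ≤ r ^ (1 + α) * (ε + |d r|))
    (hd : ∀ r ∈ Ioo 0 R, |d r| ≤ A * henonBarrier α r) :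
    ∀ r ∈ Ioo 0 R, |q r| ≤ (ε + A) / 2 *
      (r ^ (1 + α) * ((2 + 4 * henonPotential α r) * henonBarrier α r)) := fun r hr => by
  have := rpow_nonneg hr.1.le (1 + α)
  have := henonPotential_nonneg (α := α) hr.1.le
  have hg := one_le_henonBarrier (α := α) hr.1.le
  calc |q r| ≤ r ^ (1 + α) * (ε * 1 + |d r|) := by simpa using hq r hr
    _ ≤ r ^ (1 + α) * (ε * henonBarrier α r + A * henonBarrier α r) := by
        gcongr
        exact hd r hr
    _ = (ε + A) / 2 * (r ^ (1 + α) * ((2 + 4 * 0) * henonBarrier α r)) := by ring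
    _ ≤ _ := by gcongr

namespace SolvesRadialODE

variable {α ε R : ℝ} {d q : ℝ → ℝ}

theorem abs_le_mul_henonBarrier (h : SolvesRadialODE d q R) (hd0 : d 0 = 0) (hα : -2 < α)
    (hε : 0 ≤ ε) (hq : ∀ r ∈ Ioo 0 R, |q r| ≤ r ^ (1 + α) * (ε + |d r|)) {r : ℝ}
    (hr : r ∈ Icc 0 R) : |d r| ≤ ε * henonBarrier α r := by
  have hg := henonBarrier_pos α
  have ratio_continuousOn : ContinuousOn (fun s => |d s| / henonBarrier α s) (Icc 0 R) :=
    h.continuousOn.abs.div (solvesRadialODE_henonBarrier hα R).continuousOn fun s _ => (hg s).ne'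
  obtain ⟨m, hm, hmax⟩ := isCompact_Icc.exists_isMaxOn ⟨r, hr⟩ ratio_continuousOn
  set A := |d m| / henonBarrier α m
  have hA0 : 0 ≤ A := div_nonneg (abs_nonneg _) (hg m).le
  have le_A {s : ℝ} (hs : s ∈ Icc 0 R) : |d s| ≤ A * henonBarrier α s :=
    (div_le_iff₀ (hg s)).1 (hmax hs)
  have improved := h.abs_sub_le_sub ((solvesRadialODE_henonBarrier hα R).const_mul ((ε + A) / 2))
    (abs_source_le_of_abs_le_mul_henonBarrier hε hA0 hq fun s hs => le_A (Ioo_subset_Icc_self hs))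
    hm
  have A_le : A ≤ ε := by
    rw [hd0, sub_zero, henonBarrier_zero hα] at improved
    have : A ≤ (ε + A) / 2 := (div_le_iff₀ (hg m)).2 (by linarith)
    linarith
  exact (le_A hr).trans (mul_le_mul_of_nonneg_right A_le (hg r).le)

theorem abs_deriv_le_mul_deriv_henonBarrier (h : SolvesRadialODE d q R) (hd0 : d 0 = 0)
    (hα : -2 < α) (hε : 0 ≤ ε) (hq : ∀ r ∈ Ioo 0 R, |q r| ≤ r ^ (1 + α) * (ε + |d r|)) {r : ℝ}
    (hr : r ∈ Ioo 0 R) : |deriv d r| ≤ ε * deriv (henonBarrier α) r := by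
  have := h.abs_deriv_le ((solvesRadialODE_henonBarrier hα R).const_mul ((ε + ε) / 2))
    (abs_source_le_of_abs_le_mul_henonBarrier hε hε hq fun s hs =>
      h.abs_le_mul_henonBarrier hd0 hα hε hq (Ioo_subset_Icc_self hs)) hr
  rwa [add_self_div_two, deriv_const_mul_field] at this

end SolvesRadialODE

/-! ### The power nonlinearity as a perturbation of the exponential -/

lemma abs_exp_sub_exp_le {a b : ℝ} (ha : a ≤ 0) (hb : b ≤ 0) : |exp a - exp b| ≤ |a - b| := by
  have := (convex_Iic 0).norm_image_sub_le_of_norm_deriv_le (f := exp) (C := 1)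
    (fun x _ => differentiableAt_exp) (fun x hx => by simpa using hx) hb ha
  simpa using this

lemma abs_mul_log_one_add_div_sub_le {p w : ℝ} (hp : 0 < p) (hw : -p < w) :
    |p * log (1 + w / p) - w| ≤ w ^ 2 / (p + w) := by
  have hpw : 0 < p + w := by linarith
  have one_add_eq : 1 + w / p = (p + w) / p := by field_simp
  have pos : 0 < 1 + w / p := one_add_eq ▸ div_pos hpw hp
  have upper : p * log (1 + w / p) ≤ w :=
    calc p * log (1 + w / p) ≤ p * (1 + w / p - 1) := by
          gcongr
          exact log_le_sub_one_of_pos pos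
      _ = w := by field_simp; ring
  have lower : w - w ^ 2 / (p + w) ≤ p * log (1 + w / p) :=
    calc w - w ^ 2 / (p + w) = p * (1 - (1 + w / p)⁻¹) := by
          rw [one_add_eq]
          field_simp
          ring
      _ ≤ p * log (1 + w / p) := by
          gcongr
          exact one_sub_inv_le_log_of_pos pos
  have : 0 ≤ w ^ 2 / (p + w) := by positivity
  exact abs_le.2 ⟨by linarith, by linarith⟩

lemma abs_one_add_div_rpow_sub_exp_le {p w : ℝ} (hp : 0 < p) (hpw : -p < w) (hw : w ≤ 0) :
    |(1 + w / p) ^ p - exp w| ≤ w ^ 2 / (p + w) := by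
  have pos : 0 < 1 + w / p := by
    rw [show 1 + w / p = (p + w) / p by field_simp]
    exact div_pos (by linarith) hp
  have log_nonpos : log (1 + w / p) ≤ 0 :=
    Real.log_nonpos pos.le (by linarith [div_nonpos_of_nonpos_of_nonneg hw hp.le])
  rw [rpow_def_of_pos pos, mul_comm]
  exact (abs_exp_sub_exp_le (mul_nonpos_of_nonneg_of_nonpos hp.le log_nonpos) hw).trans
    (abs_mul_log_one_add_div_sub_le hp hpw)

/-! ### Rescaled Hénon solutions -/

/-- `u` is a positive radial solution, vanishing on the boundary, of `-Δu = |x| ^ α |u| ^ (p - 1) u`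
in the unit disc. Twice differentiability is encoded in `equation`: the second term is nonzero,
whereas `deriv` would be `0` wherever `r u'` were not differentiable. -/
structure IsPositiveHenonSolution (α p : ℝ) (u : ℝ → ℝ) : Prop where
  contDiffOn : ContDiffOn ℝ 1 u (Icc 0 1)
  equation : ∀ r ∈ Ioo (0 : ℝ) 1,
    deriv (fun s => s * deriv u s) r + r ^ (1 + α) * |u r| ^ (p - 1) * u r = 0
  deriv_zero : deriv u 0 = 0
  boundary : u 1 = 0
  pos : ∀ r ∈ Ico (0 : ℝ) 1, 0 < u r

/-- The scale `ρ_p` at which the solution concentrates at the origin. -/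
noncomputable def henonScale (α p : ℝ) (u : ℝ → ℝ) : ℝ := (p * u 0 ^ (p - 1)) ^ (-(1 / (2 + α)))

/-- The rescaled function `ũ_p`, considered on `[0, 1 / ρ_p]`. -/
noncomputable def henonRescaling (α p : ℝ) (u : ℝ → ℝ) (r : ℝ) : ℝ :=
  p * (u (henonScale α p u * r) - u 0) / u 0

lemma henonRescaling_eq (α p : ℝ) (u : ℝ → ℝ) :
    henonRescaling α p u = fun r => p / u 0 * (u (henonScale α p u * r) - u 0) := by
  funext r
  rw [henonRescaling]
  ring

lemma henonRescaling_zero {α p : ℝ} {u : ℝ → ℝ} : henonRescaling α p u 0 = 0 := by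
  simp [henonRescaling]

namespace IsPositiveHenonSolution

variable {α p r R : ℝ} {u : ℝ → ℝ}

lemma solvesRadialODE (hu : IsPositiveHenonSolution α p u) :
    SolvesRadialODE u (fun r => -(r ^ (1 + α) * u r ^ p)) 1 := by
  have differentiableOn : DifferentiableOn ℝ u (Ioo 0 1) :=
    (hu.contDiffOn.differentiableOn one_ne_zero).mono Ioo_subset_Icc_self
  refine ⟨hu.contDiffOn.continuousOn, differentiableOn, ?_, fun r hr => ?_⟩
  · have := hu.contDiffOn.continuousOn_derivWithin (uniqueDiffOn_Icc one_pos) le_rfl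
    refine (continuousOn_id.mul (this.mono Ico_subset_Icc_self)).congr fun r hr => ?_
    rcases hr.1.eq_or_lt with rfl | hr0
    · exact (zero_mul _).trans (zero_mul _).symm
    · exact congrArg (r * ·) (derivWithin_of_mem_nhds (Icc_mem_nhds hr0 hr.2)).symm
  · have hur := hu.pos r (Ioo_subset_Ico_self hr)
    have deriv_flux : deriv (fun s => s * deriv u s) r = -(r ^ (1 + α) * u r ^ p) := by
      have := hu.equation r hr
      rw [abs_of_pos hur, mul_assoc, ← rpow_add_one hur.ne', sub_add_cancel] at this
      linarith
    have : -(r ^ (1 + α) * u r ^ p) ≠ 0 :=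
      (neg_neg_of_pos (mul_pos (rpow_pos_of_pos hr.1 _) (rpow_pos_of_pos hur _))).ne
    rw [← deriv_flux] at this ⊢
    exact (differentiableAt_of_deriv_ne_zero this).hasDerivAt

lemma apply_zero_pos (hu : IsPositiveHenonSolution α p u) : 0 < u 0 := hu.pos 0 (by simp)

lemma henonScale_pos (hu : IsPositiveHenonSolution α p u) (hp : 0 < p) : 0 < henonScale α p u :=
  rpow_pos_of_pos (mul_pos hp (rpow_pos_of_pos hu.apply_zero_pos _)) _

lemma mul_henonScale_rpow (hu : IsPositiveHenonSolution α p u) (hp : 0 < p) (hα : -2 < α) :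
    p * (henonScale α p u * (henonScale α p u ^ (1 + α) * u 0 ^ p)) = u 0 := by
  have hu0 := hu.apply_zero_pos
  have hQ : 0 < p * u 0 ^ (p - 1) := mul_pos hp (rpow_pos_of_pos hu0 _)
  have scale_rpow : henonScale α p u * henonScale α p u ^ (1 + α) = (p * u 0 ^ (p - 1))⁻¹ := by
    have : 2 + α ≠ 0 := by linarith
    rw [← rpow_one_add' (hu.henonScale_pos hp).le (by linarith), henonScale, ← rpow_mul hQ.le,
      show -(1 / (2 + α)) * (1 + (1 + α)) = -1 by field_simp; ring, rpow_neg_one]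
  have u0_rpow : u 0 ^ p = u 0 ^ (p - 1) * u 0 := by rw [← rpow_add_one hu0.ne', sub_add_cancel]
  calc p * (henonScale α p u * (henonScale α p u ^ (1 + α) * u 0 ^ p))
      = p * u 0 ^ (p - 1) * (henonScale α p u * henonScale α p u ^ (1 + α)) * u 0 := by
        rw [u0_rpow]
        ring
    _ = u 0 := by rw [scale_rpow, mul_inv_cancel₀ hQ.ne', one_mul]

lemma one_add_henonRescaling_div (hu : IsPositiveHenonSolution α p u) (hp : 0 < p) (r : ℝ) :
    1 + henonRescaling α p u r / p = u (henonScale α p u * r) / u 0 := by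
  have := hu.apply_zero_pos
  rw [henonRescaling]
  field_simp
  ring

lemma one_add_henonRescaling_div_pos (hu : IsPositiveHenonSolution α p u) (hp : 0 < p)
    (hr : r ∈ Ico 0 (1 / henonScale α p u)) : 0 < 1 + henonRescaling α p u r / p := by
  have hρ := hu.henonScale_pos hp
  rw [hu.one_add_henonRescaling_div hp]
  exact div_pos (hu.pos _ ⟨mul_nonneg hρ.le hr.1, (lt_div_iff₀' hρ).1 hr.2⟩) hu.apply_zero_pos

lemma henonRescaling_one_div (hu : IsPositiveHenonSolution α p u) (hp : 0 < p) :
    henonRescaling α p u (1 / henonScale α p u) = -p := by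
  have hu0 := hu.apply_zero_pos.ne'
  rw [henonRescaling, mul_one_div_cancel (hu.henonScale_pos hp).ne', hu.boundary, zero_sub,
    mul_neg, neg_div, mul_div_cancel_right₀ _ hu0]

lemma deriv_henonRescaling_zero (hu : IsPositiveHenonSolution α p u) :
    deriv (henonRescaling α p u) 0 = 0 := by
  rw [henonRescaling_eq, deriv_rescale, mul_zero, hu.deriv_zero, mul_zero, mul_zero]

lemma solvesRadialODE_henonRescaling (hu : IsPositiveHenonSolution α p u) (hp : 0 < p)
    (hα : -2 < α) : SolvesRadialODE (henonRescaling α p u)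
      (fun r => -(r ^ (1 + α) * (1 + henonRescaling α p u r / p) ^ p))
      (1 / henonScale α p u) := by
  have hρ := hu.henonScale_pos hp
  have hu0 := hu.apply_zero_pos
  have := hu.solvesRadialODE.rescale hρ (p / u 0) (u 0)
  rw [← henonRescaling_eq] at this
  refine this.congr_right fun r hr => ?_
  have pos := hu.one_add_henonRescaling_div_pos hp (Ioo_subset_Ico_self hr)
  have u_eq : u (henonScale α p u * r) = u 0 * (1 + henonRescaling α p u r / p) := by
    rw [hu.one_add_henonRescaling_div hp, mul_div_cancel₀ _ hu0.ne']
  simp only [u_eq, mul_rpow hρ.le hr.1.le, mul_rpow hu0.le pos.le]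
  rw [div_mul_eq_mul_div, div_eq_iff hu0.ne']
  linear_combination -(r ^ (1 + α) * (1 + henonRescaling α p u r / p) ^ p) *
    hu.mul_henonScale_rpow hp hα

lemma henonRescaling_nonpos (hu : IsPositiveHenonSolution α p u) (hp : 0 < p) (hα : -2 < α)
    (hr : r ∈ Icc 0 (1 / henonScale α p u)) : henonRescaling α p u r ≤ 0 := by
  have antitone := (hu.solvesRadialODE_henonRescaling hp hα).antitoneOn fun s hs =>
    neg_nonpos.2 (mul_nonneg (rpow_nonneg hs.1.le _)
      (rpow_nonneg (hu.one_add_henonRescaling_div_pos hp (Ioo_subset_Ico_self hs)).le _))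
  exact (antitone (left_mem_Icc.2 (hr.1.trans hr.2)) hr hr.1).trans_eq henonRescaling_zero

lemma abs_henonRescaling_le (hu : IsPositiveHenonSolution α p u) (hp : 0 < p) (hα : -2 < α)
    (hr : r ∈ Icc 0 (1 / henonScale α p u)) :
    |henonRescaling α p u r| ≤ henonPotential α r := by
  have source_le : ∀ s ∈ Ioo 0 (1 / henonScale α p u),
      |-(s ^ (1 + α) * (1 + henonRescaling α p u s / p) ^ p)| ≤ s ^ (1 + α) := fun s hs => by
    have hs1 := rpow_nonneg hs.1.le (1 + α)
    have pos := hu.one_add_henonRescaling_div_pos hp (Ioo_subset_Ico_self hs)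
    have le_one : 1 + henonRescaling α p u s / p ≤ 1 := by
      linarith [div_nonpos_of_nonpos_of_nonneg
        (hu.henonRescaling_nonpos hp hα (Ioo_subset_Icc_self hs)) hp.le]
    rw [abs_neg, abs_of_nonneg (mul_nonneg hs1 (rpow_nonneg pos.le p))]
    exact mul_le_of_le_one_right hs1 (rpow_le_one pos.le le_one hp.le)
  simpa [henonRescaling_zero, henonPotential_zero hα] using
    (hu.solvesRadialODE_henonRescaling hp hα).abs_sub_le_sub
      (solvesRadialODE_henonPotential hα _) source_le hr

lemma lt_one_div_henonScale (hu : IsPositiveHenonSolution α p u) (hp : 0 < p) (hα : -2 < α)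
    (hR : henonPotential α R < p) : R < 1 / henonScale α p u := by
  have hT : 0 ≤ 1 / henonScale α p u := (one_div_pos.2 (hu.henonScale_pos hp)).le
  have p_le : p ≤ henonPotential α (1 / henonScale α p u) := by
    simpa only [hu.henonRescaling_one_div hp, abs_neg, abs_of_pos hp] using
      hu.abs_henonRescaling_le hp hα (right_mem_Icc.2 hT)
  by_contra! hle
  exact (p_le.trans (henonPotential_le_henonPotential hα hT hle)).not_gt hR

/-! ### Convergence to the limit profile -/

lemma solvesRadialODE_henonRescaling_sub_liouvilleProfile (hu : IsPositiveHenonSolution α p u)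
    (hp : 0 < p) (hα : -2 < α) (hR : henonPotential α R < p) :
    SolvesRadialODE (fun r => henonRescaling α p u r - liouvilleProfile α r)
      (fun r => -(r ^ (1 + α) * (1 + henonRescaling α p u r / p) ^ p) -
        -(r ^ (1 + α) * exp (liouvilleProfile α r))) R :=
  ((hu.solvesRadialODE_henonRescaling hp hα).mono (hu.lt_one_div_henonScale hp hα hR).le).sub
    (solvesRadialODE_liouvilleProfile hα R)

lemma abs_source_sub_source_le (hu : IsPositiveHenonSolution α p u) (hp : 0 < p) (hα : -2 < α)
    (hR : henonPotential α R < p) :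
    ∀ r ∈ Ioo 0 R, |-(r ^ (1 + α) * (1 + henonRescaling α p u r / p) ^ p) -
        -(r ^ (1 + α) * exp (liouvilleProfile α r))| ≤
      r ^ (1 + α) * (henonPotential α R ^ 2 / (p - henonPotential α R) +
        |henonRescaling α p u r - liouvilleProfile α r|) := fun r hr => by
  set w := henonRescaling α p u r
  set U := liouvilleProfile α r
  set M := henonPotential α R
  have hr' : r ∈ Icc 0 (1 / henonScale α p u) :=
    ⟨hr.1.le, hr.2.le.trans (hu.lt_one_div_henonScale hp hα hR).le⟩
  have hw : w ≤ 0 := hu.henonRescaling_nonpos hp hα hr'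
  have hwM : |w| ≤ M := (hu.abs_henonRescaling_le hp hα hr').trans
    (henonPotential_le_henonPotential hα hr.1.le hr.2.le)
  have neg_M_le : -M ≤ w := (abs_le.1 hwM).1
  have power_sub_exp : |(1 + w / p) ^ p - exp w| ≤ M ^ 2 / (p - M) :=
    (abs_one_add_div_rpow_sub_exp_le hp (by linarith) hw).trans
      (div_le_div₀ (sq_nonneg M) (sq_le_sq' neg_M_le (abs_le.1 hwM).2) (by linarith) (by linarith))
  have exp_sub_exp : |exp w - exp U| ≤ |w - U| :=
    abs_exp_sub_exp_le hw (liouvilleProfile_nonpos hα hr.1.le)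
  rw [neg_sub_neg, ← mul_sub, abs_mul, abs_of_nonneg (rpow_nonneg hr.1.le _), abs_sub_comm]
  exact mul_le_mul_of_nonneg_left
    ((abs_sub_le _ _ _).trans (add_le_add power_sub_exp exp_sub_exp)) (rpow_nonneg hr.1.le _)

theorem abs_henonRescaling_sub_liouvilleProfile_le (hu : IsPositiveHenonSolution α p u)
    (hp : 0 < p) (hα : -2 < α) (hR : henonPotential α R < p) (hr : r ∈ Icc 0 R) :
    |henonRescaling α p u r - liouvilleProfile α r| ≤
      henonPotential α R ^ 2 / (p - henonPotential α R) * henonBarrier α R := by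
  have hε : 0 ≤ henonPotential α R ^ 2 / (p - henonPotential α R) :=
    div_nonneg (sq_nonneg _) (by linarith)
  exact ((hu.solvesRadialODE_henonRescaling_sub_liouvilleProfile hp hα hR).abs_le_mul_henonBarrier
    (by simp [henonRescaling_zero, liouvilleProfile_zero hα]) hα hε
    (hu.abs_source_sub_source_le hp hα hR) hr).trans
      (mul_le_mul_of_nonneg_left (henonBarrier_le_henonBarrier hα hr.1 hr.2) hε)

theorem abs_deriv_henonRescaling_sub_deriv_liouvilleProfile_le
    (hu : IsPositiveHenonSolution α p u) (hp : 0 < p) (hα : -1 < α)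
    (hR : henonPotential α R < p) (hr : r ∈ Ico 0 R) :
    |deriv (henonRescaling α p u) r - deriv (liouvilleProfile α) r| ≤
      henonPotential α R ^ 2 / (p - henonPotential α R) *
        (2 / (2 + α) * R ^ (1 + α) * henonBarrier α R) := by
  have hα2 : -2 < α := by linarith
  have hα0 : 0 < 2 + α := by linarith
  have hα1 : 0 ≤ 1 + α := by linarith
  have hR0 : 0 ≤ R := hr.1.trans hr.2.le
  have hg := henonBarrier_pos α
  have hε : 0 ≤ henonPotential α R ^ 2 / (p - henonPotential α R) :=
    div_nonneg (sq_nonneg _) (by linarith)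
  rcases hr.1.eq_or_lt with rfl | hr0
  · rw [hu.deriv_henonRescaling_zero, deriv_liouvilleProfile_zero hα, sub_zero, abs_zero]
    have := hg R
    positivity
  have hr' : r ∈ Ioo 0 R := ⟨hr0, hr.2⟩
  have hw := (hu.solvesRadialODE_henonRescaling hp hα2).mono
    (hu.lt_one_div_henonScale hp hα2 hR).le
  rw [← deriv_fun_sub (hw.hasDerivAt hr').differentiableAt
    ((solvesRadialODE_liouvilleProfile hα2 R).hasDerivAt hr').differentiableAt]
  have hd := hu.solvesRadialODE_henonRescaling_sub_liouvilleProfile hp hα2 hR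
  refine (hd.abs_deriv_le_mul_deriv_henonBarrier
    (by simp [henonRescaling_zero, liouvilleProfile_zero hα2]) hα2 hε
    (hu.abs_source_sub_source_le hp hα2 hR) hr').trans ?_
  rw [deriv_henonBarrier hα2 hr0.ne']
  gcongr
  · exact (hg r).le
  · exact hr.2.le
  · exact henonBarrier_le_henonBarrier hα2 hr0.le hr.2.le

end IsPositiveHenonSolution

lemma tendstoUniformlyOn_of_abs_sub_le {ι β : Type*} {l : Filter ι} {F : ι → β → ℝ} {f : β → ℝ}
    {s : Set β} {b : ι → ℝ} (hb : Tendsto b l (𝓝 0))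
    (h : ∀ᶠ i in l, ∀ x ∈ s, |F i x - f x| ≤ b i) : TendstoUniformlyOn F f l s := by
  rw [Metric.tendstoUniformlyOn_iff]
  intro ε hε
  filter_upwards [h, hb.eventually_lt_const hε] with i hi hbi x hx
  rw [dist_comm, dist_eq]
  exact (hi x hx).trans_lt hbi

lemma tendsto_div_sub_mul_atTop (a M C : ℝ) :
    Tendsto (fun p => a / (p - M) * C) atTop (𝓝 0) := by
  simpa [sub_eq_add_neg] using
    ((tendsto_atTop_add_const_right _ (-M) tendsto_id).const_div_atTop a).mul_const C

theorem henon_positive_rescaled_convergence_general {α : ℝ} (hα : -1 < α) {u : ℝ → ℝ → ℝ}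
    (hu : ∀ᶠ p in atTop, IsPositiveHenonSolution α p (u p)) {K : Set ℝ} (hK : IsCompact K)
    (hK0 : K ⊆ Ici 0) :
    (∃ pK : ℝ, ∀ p > pK, ∀ r ∈ K, r < 1 / henonScale α p (u p)) ∧
    TendstoUniformlyOn (fun p => henonRescaling α p (u p)) (liouvilleProfile α) atTop K ∧
    TendstoUniformlyOn (fun p => deriv (henonRescaling α p (u p))) (deriv (liouvilleProfile α))
      atTop K := by
  have hα2 : -2 < α := by linarith
  obtain ⟨R, -, hKR⟩ := hK.isBounded.subset_ball_lt 0 0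
  have hKR' : K ⊆ Ico 0 R := fun r hr =>
    ⟨hK0 hr, (le_abs_self r).trans_lt (mem_ball_zero_iff.1 (hKR hr))⟩
  have hp : ∀ᶠ p in atTop, IsPositiveHenonSolution α p (u p) ∧ 0 < p ∧ henonPotential α R < p :=
    hu.and ((eventually_gt_atTop 0).and (eventually_gt_atTop _))
  refine ⟨?_, tendstoUniformlyOn_of_abs_sub_le (tendsto_div_sub_mul_atTop _ _ _)
      (hp.mono fun p ⟨hu, hp, hR⟩ r hr => hu.abs_henonRescaling_sub_liouvilleProfile_le hp hα2 hR
        (Ico_subset_Icc_self (hKR' hr))),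
    tendstoUniformlyOn_of_abs_sub_le (tendsto_div_sub_mul_atTop _ _ _)
      (hp.mono fun p ⟨hu, hp, hR⟩ r hr =>
        hu.abs_deriv_henonRescaling_sub_deriv_liouvilleProfile_le hp hα hR (hKR' hr))⟩
  obtain ⟨pK, hpK⟩ := eventually_atTop.1 hp
  refine ⟨pK, fun p hpp r hr => ?_⟩
  obtain ⟨hu, hp, hR⟩ := hpK p hpp.le
  exact (hKR' hr).2.trans (hu.lt_one_div_henonScale hp hα2 hR)

/-- The rescalings `ũ_p(r) = p (u_p(ρ_p r) - u_p(0))/u_p(0)` of the positive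
least-energy radial solution of the Hénon problem converge in `C¹_loc([0,∞))` to
`U(r) = log( 4(2+α)⁴ / (2(2+α)² + r^{2+α})² )` as `p → ∞`. -/
theorem henon_positive_rescaled_convergence
    (α : ℝ) (hα : 0 ≤ α) (u : ℝ → ℝ → ℝ) (ρ : ℝ → ℝ)
    (hreg1 : ∀ p : ℝ, 1 < p → ContDiffOn ℝ 1 (u p) (Icc 0 1))
    (hreg2 : ∀ p : ℝ, 1 < p → ContDiffOn ℝ 2 (u p) (Ioo 0 1))
    (heq : ∀ p : ℝ, 1 < p → ∀ r ∈ Ioo (0:ℝ) 1,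
      deriv (fun s => s * deriv (u p) s) r + r ^ (1 + α) * |u p r| ^ (p - 1) * u p r = 0)
    (hderiv0 : ∀ p : ℝ, 1 < p → deriv (u p) 0 = 0)
    (hbdry : ∀ p : ℝ, 1 < p → u p 1 = 0)
    (hpos : ∀ p : ℝ, 1 < p → ∀ r ∈ Ico (0:ℝ) 1, 0 < u p r)
    (hρ : ∀ p : ℝ, ρ p = (p * u p 0 ^ (p - 1)) ^ (-(1 / (2 + α))))
    (ut : ℝ → ℝ → ℝ)
    (hut : ∀ p r : ℝ, ut p r = p * (u p (ρ p * r) - u p 0) / u p 0)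
    (U : ℝ → ℝ)
    (hU : ∀ r : ℝ, U r = Real.log (4 * (2 + α) ^ 4 / (2 * (2 + α) ^ 2 + r ^ (2 + α)) ^ 2)) :
    ∀ K : Set ℝ, IsCompact K → K ⊆ Ici 0 →
      (∃ pK : ℝ, ∀ p > pK, ∀ r ∈ K, r < 1 / ρ p) ∧
      TendstoUniformlyOn (fun p r => ut p r) U atTop K ∧
      TendstoUniformlyOn (fun p r => deriv (ut p) r) (deriv U) atTop K := by
  obtain rfl : ρ = fun p => henonScale α p (u p) := funext hρ
  obtain rfl : ut = fun p => henonRescaling α p (u p) := funext₂ hut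
  obtain rfl : U = liouvilleProfile α := funext hU
  exact fun K => henon_positive_rescaled_convergence_general (by linarith)
    ((eventually_gt_atTop 1).mono fun p hp =>
      ⟨hreg1 p hp, heq p hp, hderiv0 p hp, hbdry p hp, hpos p hp⟩)
end

section
/- Let ℓ > 0, γ > 0, δ > 0 and define Z(r) := log( 2(2+γ)²·δ·r^γ / (δ + r^{2+γ})² ). Then Z(ℓ) = 0 and Z′(ℓ) = 0 hold simultaneously if and only if γ = √(2ℓ² + 4) − 2 and δ = ((γ+4)/γ)·ℓ^{2+γ}. -/
open Real Set Filter MeasureTheory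

/-!
The derivative `Z′(r) = (γδ - (γ+4) r^{2+γ}) / (r (δ + r^{2+γ}))` vanishes exactly when
`δ = ((γ+4)/γ) r^{2+γ}`. Substituting this value of `δ` gives `e^{Z(r)} = γ(γ+4) / (2r²)`, so that
at a critical radius `Z(r) = 0` means `γ(γ+4) = 2r²`, that is, `(γ+2)² = 2r² + 4`.
-/

/-- The radial solution `Z_{γ;δ}` of the singular Liouville equation `-ΔZ = e^Z - 2πγδ₀` in the
plane, as a function of the distance `r` to the singularity. The solution is only meant for
`γ ≠ -2`, `0 < δ` and `0 < r`, where the argument of the logarithm is positive. -/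
noncomputable def singularBubble (γ δ r : ℝ) : ℝ :=
  log (2 * (2 + γ) ^ 2 * δ * r ^ γ / (δ + r ^ (2 + γ)) ^ 2)

section

variable {γ δ r : ℝ}

lemma exp_singularBubble (hγ : γ ≠ -2) (hδ : 0 < δ) (hr : 0 < r) :
    exp (singularBubble γ δ r) = 2 * (2 + γ) ^ 2 * δ * r ^ γ / (δ + r ^ (2 + γ)) ^ 2 := by
  have : 2 + γ ≠ 0 := fun h ↦ hγ (by linarith)
  exact exp_log (by positivity)

lemma singularBubble_eq_add_sub (hγ : γ ≠ -2) (hδ : 0 < δ) (hr : 0 < r) :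
    singularBubble γ δ r =
      log (2 * (2 + γ) ^ 2 * δ) + γ * log r - 2 * log (δ + r ^ (2 + γ)) := by
  have : 2 + γ ≠ 0 := fun h ↦ hγ (by linarith)
  rw [singularBubble, log_div (by positivity) (by positivity), log_mul (by positivity)
    (by positivity), log_rpow hr, log_pow, Nat.cast_ofNat]

lemma hasDerivAt_singularBubble (hγ : γ ≠ -2) (hδ : 0 < δ) (hr : 0 < r) :
    HasDerivAt (singularBubble γ δ)
      ((γ * δ - (γ + 4) * r ^ (2 + γ)) / (r * (δ + r ^ (2 + γ)))) r := by
  have h_sum : HasDerivAt (fun s ↦ δ + s ^ (2 + γ)) ((2 + γ) * r ^ (2 + γ - 1)) r :=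
    (hasDerivAt_rpow_const (Or.inl hr.ne')).const_add δ
  have h_expanded := (((hasDerivAt_log hr.ne').const_mul γ).const_add
    (log (2 * (2 + γ) ^ 2 * δ))).fun_sub ((h_sum.log (by positivity)).const_mul 2)
  have h_local : singularBubble γ δ =ᶠ[nhds r] fun s ↦
      log (2 * (2 + γ) ^ 2 * δ) + γ * log s - 2 * log (δ + s ^ (2 + γ)) := by
    filter_upwards [lt_mem_nhds hr] with s hs using singularBubble_eq_add_sub hγ hδ hs
  refine (h_expanded.congr_of_eventuallyEq h_local).congr_deriv ?_
  rw [rpow_sub_one hr.ne']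
  have : δ + r ^ (2 + γ) ≠ 0 := by positivity
  field_simp
  ring

lemma deriv_singularBubble_eq_zero_iff (hγ : γ ≠ -2) (hδ : 0 < δ) (hr : 0 < r) :
    deriv (singularBubble γ δ) r = 0 ↔ γ ≠ 0 ∧ δ = (γ + 4) / γ * r ^ (2 + γ) := by
  have h_den : r * (δ + r ^ (2 + γ)) ≠ 0 := by positivity
  rw [(hasDerivAt_singularBubble hγ hδ hr).deriv, div_eq_zero_iff, or_iff_left h_den, sub_eq_zero]
  rcases eq_or_ne γ 0 with rfl | hγ₀
  · simp [hr.ne']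
  · rw [and_iff_right hγ₀, div_mul_eq_mul_div, eq_div_iff hγ₀, mul_comm δ]

lemma exp_singularBubble_of_deriv_eq_zero (hγ : γ ≠ -2) (hδ : 0 < δ) (hr : 0 < r)
    (h_crit : deriv (singularBubble γ δ) r = 0) :
    exp (singularBubble γ δ r) = γ * (γ + 4) / (2 * r ^ 2) := by
  obtain ⟨hγ₀, hδ_eq⟩ := (deriv_singularBubble_eq_zero_iff hγ hδ hr).1 h_crit
  have h_two_add : 2 + γ ≠ 0 := fun h ↦ hγ (by linarith)
  have h_pow : r ^ (2 + γ) = r ^ 2 * r ^ γ := by rw [rpow_add hr, rpow_two]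
  have h_sum : δ + r ^ (2 + γ) = 2 * (2 + γ) / γ * (r ^ 2 * r ^ γ) := by
    rw [hδ_eq, h_pow]
    field_simp
    ring
  rw [exp_singularBubble hγ hδ hr, h_sum, hδ_eq, h_pow]
  have : r ^ γ ≠ 0 := by positivity
  field_simp

lemma singularBubble_eq_zero_iff_of_deriv_eq_zero (hγ : γ ≠ -2) (hδ : 0 < δ) (hr : 0 < r)
    (h_crit : deriv (singularBubble γ δ) r = 0) :
    singularBubble γ δ r = 0 ↔ γ * (γ + 4) = 2 * r ^ 2 := by
  rw [← exp_eq_one_iff, exp_singularBubble_of_deriv_eq_zero hγ hδ hr h_crit,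
    div_eq_one_iff_eq (by positivity)]

lemma abs_add_two_eq_sqrt_iff : |γ + 2| = √(2 * r ^ 2 + 4) ↔ γ * (γ + 4) = 2 * r ^ 2 := by
  rw [eq_comm, sqrt_eq_iff_eq_sq (by positivity) (abs_nonneg _), sq_abs]
  constructor <;> intro h <;> linarith

end

/-- Both signs of `γ + 2` occur because `Z_{γ;δ} = Z_{-4-γ;1/δ}`. -/
theorem singular_liouville_normalization_general {ℓ γ δ : ℝ} (hℓ : 0 < ℓ) (hγ : γ ≠ -2)
    (hδ : 0 < δ) :
    (singularBubble γ δ ℓ = 0 ∧ deriv (singularBubble γ δ) ℓ = 0) ↔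
      (|γ + 2| = √(2 * ℓ ^ 2 + 4) ∧ δ = (γ + 4) / γ * ℓ ^ (2 + γ)) := by
  have hγ₀ (h : γ * (γ + 4) = 2 * ℓ ^ 2) : γ ≠ 0 :=
    left_ne_zero_of_mul (h.trans_ne (by positivity))
  rw [and_congr_left (singularBubble_eq_zero_iff_of_deriv_eq_zero hγ hδ hℓ),
    deriv_singularBubble_eq_zero_iff hγ hδ hℓ, abs_add_two_eq_sqrt_iff]
  exact and_congr_right fun h ↦ and_iff_right (hγ₀ h)

/-- For `ℓ, γ, δ > 0` and
`Z(r) = log( 2(2+γ)²δ r^γ / (δ + r^{2+γ})² )`, the conditions `Z(ℓ) = 0` and `Z′(ℓ) = 0`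
hold simultaneously iff `γ = √(2ℓ²+4) − 2` and `δ = ((γ+4)/γ) ℓ^{2+γ}`. -/
theorem singular_liouville_normalization
    (ℓ γ δ : ℝ) (hℓ : 0 < ℓ) (hγ : 0 < γ) (hδ : 0 < δ)
    (Z : ℝ → ℝ)
    (hZ : ∀ r : ℝ, Z r = Real.log (2 * (2 + γ) ^ 2 * δ * r ^ γ / (δ + r ^ (2 + γ)) ^ 2)) :
    (Z ℓ = 0 ∧ deriv Z ℓ = 0) ↔
      (γ = Real.sqrt (2 * ℓ ^ 2 + 4) - 2 ∧ δ = (γ + 4) / γ * ℓ ^ (2 + γ)) := by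
  obtain rfl : Z = singularBubble γ δ := funext hZ
  rw [singular_liouville_normalization_general hℓ (by linarith) hδ, abs_of_pos (by linarith),
    eq_sub_iff_add_eq]
end

section
/- Set ε_p := (p·v_p(0)^{p−1})^{−1/2} and ṽ_p(t) := p·(v_p(ε_p·t) − v_p(0))/v_p(0) for 0 ≤ t < 1/ε_p, and let V(t) := log( 64/(8+t²)² ). Assume that as p → ∞: ε_p → 0 and ṽ_p → V uniformly on every compact subset of [0,∞) (for p large enough that the compact set lies in [0,1/ε_p)). Assume moreover that −1 < ν₁(p) < 0 for every p. Then ν₁(p) → −1 as p → ∞. -/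
open Real Set Filter MeasureTheory

open scoped Topology ContDiff

/-!
The weights `t` and `1 / t` make the Rayleigh quotient invariant under `t ↦ ε t`, provided the
potential `W` becomes `ε² W (ε ·)`. For the Lane-Emden solutions the dilated potential is
`|v (ε s) / v 0| ^ (p - 1) = |1 + w / p| ^ (p - 1)` with `w` the rescaled solution, so it converges
to `e^V = 64 / (8 + s²)²`.

The limit equation has the ground state `ψ = s / (8 + s²)` with eigenvalue `-1`. The quotient of
`χ ψ` exceeds `-1` only by `∫ s ψ² χ'² / ∫ (χ ψ)² / s`, which is `O(1 / R²)` for a cut-off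
`χ = b (log s / R)`. Dilating such a compactly supported competitor back into `(0, 1)` bounds the
upper limit of the eigenvalues by `-1`.
-/

/-- The singular Rayleigh quotient `(∫ t φ'² - ∫ t W φ²) / ∫ φ² / t` of the radial operator with
potential `W`. The integrals run over the half-line, so that dilations act on it; for `φ` supported
in the unit interval this is the quotient over `(0, 1)`. -/
noncomputable def singularRayleigh (W φ : ℝ → ℝ) : ℝ :=
  ((∫ t in Ioi 0, t * deriv φ t ^ 2) - ∫ t in Ioi 0, t * W t * φ t ^ 2) / ∫ t in Ioi 0, φ t ^ 2 / t

/-- `IsAdmissible U φ` says that `φ` is a nonzero element of `C_c^∞(U)`, a competitor in the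
variational problem for the Rayleigh quotient. -/
structure IsAdmissible (U : Set ℝ) (φ : ℝ → ℝ) : Prop where
  contDiff : ContDiff ℝ ∞ φ
  hasCompactSupport : HasCompactSupport φ
  tsupport_subset : tsupport φ ⊆ U
  ne_zero : φ ≠ 0

/-- The first singular eigenvalue on the unit interval of the radial operator with potential `W`;
it has the junk value `0` when the Rayleigh quotient is unbounded below. -/
noncomputable def firstSingularEigenvalue (W : ℝ → ℝ) : ℝ :=
  sInf (singularRayleigh W '' {φ | IsAdmissible (Ioo 0 1) φ})

section Integrability

lemma integrable_mul_sq_of_hasCompactSupport {g φ : ℝ → ℝ} (hφ : HasCompactSupport φ)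
    (hcont : Continuous φ) (hg : ContinuousOn g (tsupport φ)) :
    Integrable fun t => g t * φ t ^ 2 :=
  ((hg.mul (hcont.pow 2).continuousOn).integrableOn_compact hφ).integrable_of_forall_notMem_eq_zero
    fun t ht => by simp [image_eq_zero_of_notMem_tsupport ht]

lemma integrable_sq_div_of_hasCompactSupport {φ : ℝ → ℝ} (hφ : HasCompactSupport φ)
    (hcont : Continuous φ) (hpos : tsupport φ ⊆ Ioi 0) : Integrable fun t => φ t ^ 2 / t := by
  simp only [div_eq_inv_mul]
  exact integrable_mul_sq_of_hasCompactSupport hφ hcont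
    (continuousOn_id.inv₀ fun _ ht => (hpos ht).ne')

end Integrability

section Quotient

variable {W φ : ℝ → ℝ}

lemma setIntegral_Ioo_eq_setIntegral_Ioi {f : ℝ → ℝ} (hf : ∀ t ∉ Ioo (0 : ℝ) 1, f t = 0) :
    ∫ t in Ioo (0 : ℝ) 1, f t = ∫ t in Ioi (0 : ℝ), f t :=
  (setIntegral_eq_of_subset_of_forall_sdiff_eq_zero measurableSet_Ioi Ioo_subset_Ioi_self
    fun t ht => hf t ht.2).symm

lemma singularRayleigh_eq_setIntegral_Ioo (W : ℝ → ℝ) (hφ : tsupport φ ⊆ Ioo 0 1) :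
    singularRayleigh W φ = ((∫ t in Ioo (0 : ℝ) 1, t * deriv φ t ^ 2) -
      ∫ t in Ioo (0 : ℝ) 1, t * W t * φ t ^ 2) / ∫ t in Ioo (0 : ℝ) 1, φ t ^ 2 / t := by
  have hφ0 : ∀ t ∉ Ioo (0 : ℝ) 1, φ t = 0 := fun t ht =>
    image_eq_zero_of_notMem_tsupport fun h => ht (hφ h)
  have hdφ0 : ∀ t ∉ Ioo (0 : ℝ) 1, deriv φ t = 0 := fun t ht =>
    deriv_of_notMem_tsupport fun h => ht (hφ h)
  rw [singularRayleigh, setIntegral_Ioo_eq_setIntegral_Ioi fun t ht => by simp [hdφ0 t ht],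
    setIntegral_Ioo_eq_setIntegral_Ioi fun t ht => by simp [hφ0 t ht],
    setIntegral_Ioo_eq_setIntegral_Ioi fun t ht => by simp [hφ0 t ht]]

lemma setIntegral_Ioi_zero_eq_of_comp_mul {f g : ℝ → ℝ} {e : ℝ} (he : 0 < e)
    (hfg : ∀ s, e * f (e * s) = g s) : ∫ t in Ioi (0 : ℝ), f t = ∫ s in Ioi (0 : ℝ), g s := by
  simp only [← hfg, integral_const_mul, integral_comp_mul_left_Ioi f 0 he, mul_zero, smul_eq_mul,
    mul_inv_cancel_left₀ he.ne']

lemma singularRayleigh_comp_inv_mul (W φ : ℝ → ℝ) {e : ℝ} (he : 0 < e) :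
    singularRayleigh W (fun t => φ (e⁻¹ * t)) =
      singularRayleigh (fun s => e ^ 2 * W (e * s)) φ := by
  have hcancel : ∀ s, e⁻¹ * (e * s) = s := inv_mul_cancel_left₀ he.ne'
  rw [singularRayleigh, singularRayleigh]
  congr 1
  · congr 1
    · refine setIntegral_Ioi_zero_eq_of_comp_mul he fun s => ?_
      rw [deriv_comp_mul_left, smul_eq_mul, hcancel]
      field_simp
    · refine setIntegral_Ioi_zero_eq_of_comp_mul he fun s => ?_
      rw [hcancel]
      ring
  · refine setIntegral_Ioi_zero_eq_of_comp_mul he fun s => ?_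
    rw [hcancel]
    field_simp

lemma IsAdmissible.comp_inv_mul (hφ : IsAdmissible (Ioi 0) φ) {e b : ℝ} (he : 0 < e)
    (hb : ∀ s ∈ tsupport φ, s ≤ b) (heb : e * b < 1) :
    IsAdmissible (Ioo 0 1) fun t => φ (e⁻¹ * t) where
  contDiff := hφ.contDiff.comp (by fun_prop)
  hasCompactSupport := hφ.hasCompactSupport.comp_homeomorph
    (Homeomorph.mulLeft₀ e⁻¹ (inv_ne_zero he.ne'))
  tsupport_subset t ht := by
    have hs : e⁻¹ * t ∈ tsupport φ := tsupport_comp_subset_preimage φ (continuous_const_mul e⁻¹) ht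
    constructor
    · exact (mul_pos_iff_of_pos_left (inv_pos.2 he)).1 (hφ.tsupport_subset hs)
    · exact ((inv_mul_le_iff₀ he).1 (hb _ hs)).trans_lt heb
  ne_zero h := hφ.ne_zero <| funext fun s => by
    simpa [inv_mul_cancel_left₀ he.ne'] using congrFun h (e * s)

lemma neg_le_singularRayleigh {M : ℝ} (hW : ContinuousOn W (Ioo 0 1))
    (hM : ∀ t ∈ Ioo 0 1, |W t| ≤ M) (hφ : IsAdmissible (Ioo 0 1) φ) :
    -M ≤ singularRayleigh W φ := by
  have hM0 : 0 ≤ M := (abs_nonneg _).trans (hM (1 / 2) (by norm_num))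
  have hgrad : 0 ≤ ∫ t in Ioi (0 : ℝ), t * deriv φ t ^ 2 :=
    setIntegral_nonneg measurableSet_Ioi fun t (ht : 0 < t) => by positivity
  have hmass : 0 ≤ ∫ t in Ioi (0 : ℝ), φ t ^ 2 / t :=
    setIntegral_nonneg measurableSet_Ioi fun t (ht : 0 < t) => by positivity
  have hint : Integrable fun t => φ t ^ 2 / t :=
    integrable_sq_div_of_hasCompactSupport hφ.hasCompactSupport hφ.contDiff.continuous
      (hφ.tsupport_subset.trans Ioo_subset_Ioi_self)
  have hWint : Integrable fun t => t * W t * φ t ^ 2 :=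
    integrable_mul_sq_of_hasCompactSupport hφ.hasCompactSupport hφ.contDiff.continuous
      (continuousOn_id.mul (hW.mono hφ.tsupport_subset))
  have hpot : ∫ t in Ioi (0 : ℝ), t * W t * φ t ^ 2 ≤ M * ∫ t in Ioi (0 : ℝ), φ t ^ 2 / t := by
    rw [← integral_const_mul]
    refine integral_mono hWint.integrableOn (hint.integrableOn.const_mul M) fun t => ?_
    by_cases ht : t ∈ Ioo (0 : ℝ) 1
    · have htinv : t ≤ t⁻¹ := ht.2.le.trans ((one_le_inv₀ ht.1).2 ht.2.le)
      have hWt : W t ≤ M := (le_abs_self _).trans (hM t ht)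
      calc t * W t * φ t ^ 2 ≤ t * M * φ t ^ 2 := by
            gcongr
            exact ht.1.le
        _ ≤ t⁻¹ * M * φ t ^ 2 := by gcongr
        _ = M * (φ t ^ 2 / t) := by ring
    · simp [image_eq_zero_of_notMem_tsupport fun h => ht (hφ.tsupport_subset h)]
  rw [singularRayleigh]
  rcases hmass.eq_or_lt with h0 | hD
  · simpa [← h0] using hM0
  · rw [le_div_iff₀ hD]
    linarith

lemma firstSingularEigenvalue_le (hW : ContinuousOn W (Icc 0 1))
    (hφ : IsAdmissible (Ioo 0 1) φ) : firstSingularEigenvalue W ≤ singularRayleigh W φ := by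
  obtain ⟨M, hM⟩ := isCompact_Icc.exists_bound_of_continuousOn hW
  refine csInf_le ⟨-M, ?_⟩ (mem_image_of_mem _ hφ)
  rintro _ ⟨η, hη, rfl⟩
  exact neg_le_singularRayleigh (hW.mono Ioo_subset_Icc_self)
    (fun t ht => hM t (Ioo_subset_Icc_self ht)) hη

end Quotient

section Semicontinuity

variable {ι : Type*} {l : Filter ι} [l.IsCountablyGenerated] {W : ι → ℝ → ℝ} {Wlim φ : ℝ → ℝ}

lemma tendsto_singularRayleigh (hφ : HasCompactSupport φ) (hcont : Continuous φ)
    (hW : ∀ᶠ i in l, ContinuousOn (W i) (tsupport φ)) {M : ℝ}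
    (hM : ∀ᶠ i in l, ∀ t ∈ tsupport φ, |W i t| ≤ M)
    (hlim : ∀ t ∈ tsupport φ, Tendsto (fun i => W i t) l (𝓝 (Wlim t))) :
    Tendsto (fun i => singularRayleigh (W i) φ) l (𝓝 (singularRayleigh Wlim φ)) := by
  refine Tendsto.div_const (Tendsto.const_sub _ ?_) _
  refine tendsto_integral_filter_of_dominated_convergence (fun t => |t| * M * φ t ^ 2) ?_ ?_ ?_ ?_
  · filter_upwards [hW] with i hi
    exact (integrable_mul_sq_of_hasCompactSupport hφ hcont
      (continuousOn_id.mul hi)).aestronglyMeasurable.restrict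
  · filter_upwards [hM] with i hi
    refine Eventually.of_forall fun t => ?_
    by_cases ht : t ∈ tsupport φ
    · rw [norm_mul, norm_mul, Real.norm_eq_abs, Real.norm_eq_abs, Real.norm_of_nonneg (sq_nonneg _)]
      gcongr
      exact hi t ht
    · simp [image_eq_zero_of_notMem_tsupport ht]
  · exact (integrable_mul_sq_of_hasCompactSupport hφ hcont (by fun_prop)).integrableOn
  · refine Eventually.of_forall fun t => ?_
    by_cases ht : t ∈ tsupport φ
    · exact ((hlim t ht).const_mul t).mul_const _
    · simpa [image_eq_zero_of_notMem_tsupport ht] using tendsto_const_nhds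

lemma eventually_firstSingularEigenvalue_lt {e : ι → ℝ} (he0 : Tendsto e l (𝓝 0))
    (he : ∀ᶠ i in l, 0 < e i) (hW : ∀ᶠ i in l, ContinuousOn (W i) (Icc 0 1))
    (hφ : IsAdmissible (Ioi 0) φ) {M : ℝ}
    (hM : ∀ᶠ i in l, ∀ s ∈ tsupport φ, |e i ^ 2 * W i (e i * s)| ≤ M)
    (hlim : ∀ s ∈ tsupport φ, Tendsto (fun i => e i ^ 2 * W i (e i * s)) l (𝓝 (Wlim s)))
    {c : ℝ} (hc : singularRayleigh Wlim φ < c) :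
    ∀ᶠ i in l, firstSingularEigenvalue (W i) < c := by
  obtain ⟨b, hb⟩ := hφ.hasCompactSupport.isCompact.bddAbove
  have heb : ∀ᶠ i in l, e i * b < 1 :=
    (he0.mul_const b).eventually_lt_const (by rw [zero_mul]; exact one_pos)
  have hcont : ∀ᶠ i in l, ContinuousOn (fun s => e i ^ 2 * W i (e i * s)) (tsupport φ) := by
    filter_upwards [he, hW, heb] with i hei hWi hebi
    refine continuousOn_const.mul (hWi.comp (by fun_prop) fun s hs => ⟨?_, ?_⟩)
    · exact mul_nonneg hei.le (hφ.tsupport_subset hs).le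
    · exact (mul_le_mul_of_nonneg_left (hb hs) hei.le).trans hebi.le
  have hQ := tendsto_singularRayleigh hφ.hasCompactSupport hφ.contDiff.continuous hcont hM hlim
  filter_upwards [he, hW, heb, hQ.eventually_lt_const hc] with i hei hWi hebi hlt
  calc firstSingularEigenvalue (W i)
      ≤ singularRayleigh (W i) fun t => φ ((e i)⁻¹ * t) :=
        firstSingularEigenvalue_le hWi (hφ.comp_inv_mul hei (fun s hs => hb hs) hebi)
    _ = singularRayleigh (fun s => e i ^ 2 * W i (e i * s)) φ :=
        singularRayleigh_comp_inv_mul _ _ hei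
    _ < c := hlt

end Semicontinuity

section LogPullback

variable {f : ℝ → ℝ}

lemma contDiff_of_contDiffOn_of_tsupport_subset {n : WithTop ℕ∞} {U : Set ℝ} (hU : IsOpen U)
    (hf : ContDiffOn ℝ n f U) (hsupp : tsupport f ⊆ U) : ContDiff ℝ n f := by
  have hzero : ContDiffOn ℝ n f (tsupport f)ᶜ :=
    contDiffOn_const (c := 0) |>.congr fun _ ht => image_eq_zero_of_notMem_tsupport ht
  refine contDiff_of_contDiffOn_union_of_isOpen hf hzero ?_ hU (isClosed_tsupport f).isOpen_compl
  exact eq_univ_of_univ_subset fun t _ => (em (t ∈ tsupport f)).imp (fun ht => hsupp ht) id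

/-- The function `f (log t)` on the half-line `t > 0`, extended by zero; a cut-off that varies
slowly in the logarithmic variable costs little singular energy. -/
noncomputable def logPullback (f : ℝ → ℝ) : ℝ → ℝ :=
  (Ioi 0).indicator fun t => f (log t)

lemma logPullback_of_pos (f : ℝ → ℝ) {t : ℝ} (ht : 0 < t) : logPullback f t = f (log t) :=
  indicator_of_mem (mem_Ioi.2 ht) _

lemma support_logPullback_subset (f : ℝ → ℝ) :
    Function.support (logPullback f) ⊆ exp '' tsupport f := by
  intro t ht
  have ht0 : 0 < t := mem_of_indicator_ne_zero ht
  refine ⟨log t, subset_tsupport f ?_, exp_log ht0⟩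
  rwa [Function.mem_support, logPullback_of_pos f ht0] at ht

lemma hasCompactSupport_logPullback (hf : HasCompactSupport f) :
    HasCompactSupport (logPullback f) :=
  .of_support_subset_isCompact (hf.isCompact.image continuous_exp) (support_logPullback_subset f)

lemma tsupport_logPullback_subset_Ioi (hf : HasCompactSupport f) :
    tsupport (logPullback f) ⊆ Ioi 0 :=
  (closure_minimal (support_logPullback_subset f)
    (hf.isCompact.image continuous_exp).isClosed).trans (image_subset_iff.2 fun x _ => exp_pos x)

lemma contDiff_logPullback {n : WithTop ℕ∞} (hf : ContDiff ℝ n f) (hsupp : HasCompactSupport f) :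
    ContDiff ℝ n (logPullback f) := by
  refine contDiff_of_contDiffOn_of_tsupport_subset isOpen_Ioi ?_
    (tsupport_logPullback_subset_Ioi hsupp)
  refine ContDiffOn.congr (f := fun t => f (log t)) ?_ fun t ht => logPullback_of_pos f ht
  exact hf.comp_contDiffOn (contDiffOn_id.log fun t ht => (mem_Ioi.1 ht).ne')

lemma hasDerivAt_logPullback {t : ℝ} (ht : 0 < t) (hf : DifferentiableAt ℝ f (log t)) :
    HasDerivAt (logPullback f) (deriv f (log t) / t) t :=
  (hf.hasDerivAt.comp t (hasDerivAt_log ht.ne')).congr_of_eventuallyEq <| by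
    filter_upwards [Ioi_mem_nhds ht] with s hs using logPullback_of_pos f hs

end LogPullback

section GroundState

/-- `IsSingularEigenfunction W μ ψ` says that `ψ` solves `(t ψ')' + t W ψ = -μ ψ / t` on the
half-line `t > 0`, that is, `ψ` is a singular eigenfunction with eigenvalue `μ`. No integrability
or boundary condition is included, and `ψ` is twice differentiable only in the sense of this
equation. -/
def IsSingularEigenfunction (W : ℝ → ℝ) (μ : ℝ) (ψ : ℝ → ℝ) : Prop :=
  ∀ t ∈ Ioi (0 : ℝ), HasDerivAt (fun s => s * deriv ψ s) (-(t * W t * ψ t) - μ * (ψ t / t)) t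

variable {W ψ χ : ℝ → ℝ} {μ : ℝ}

lemma setIntegral_Ioi_zero_of_hasDerivAt_of_hasCompactSupport {G G' : ℝ → ℝ}
    (hG : HasCompactSupport G) (hpos : tsupport G ⊆ Ioi 0)
    (hderiv : ∀ t ∈ Ioi (0 : ℝ), HasDerivAt G (G' t) t) (hint : IntegrableOn G' (Ioi 0)) :
    ∫ t in Ioi (0 : ℝ), G' t = 0 := by
  have hnear : G =ᶠ[𝓝 0] 0 := notMem_tsupport_iff_eventuallyEq.1 fun h => lt_irrefl (0 : ℝ) (hpos h)
  have hcont : ContinuousAt G 0 := continuousAt_const.congr hnear.symm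
  have htop : Tendsto G atTop (𝓝 0) := hG.is_zero_at_infty.mono_left atTop_le_cocompact
  rw [integral_Ioi_of_hasDerivAt_of_tendsto hcont.continuousWithinAt hderiv hint htop,
    hnear.eq_of_nhds, Pi.zero_apply, sub_zero]

lemma hasDerivAt_groundState_flux {t χ' ψ' : ℝ} (ht : t ≠ 0) (hχ : HasDerivAt χ χ' t)
    (hψ : HasDerivAt ψ ψ' t) {w : ℝ → ℝ} (hwt : w t = t * ψ')
    (hw : HasDerivAt w (-(t * W t * ψ t) - μ * (ψ t / t)) t) :
    HasDerivAt (fun s => χ s * (χ s * w s * ψ s))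
      ((t * (χ' * ψ t + χ t * ψ') ^ 2 - t * W t * (χ t * ψ t) ^ 2) -
        (μ * ((χ t * ψ t) ^ 2 / t) + t * ψ t ^ 2 * χ' ^ 2)) t := by
  refine (hχ.mul ((hχ.mul hw).mul hψ)).congr_deriv ?_
  simp only [Pi.mul_apply, hwt]
  field_simp
  ring

theorem IsSingularEigenfunction.energy_mul_eq (heig : IsSingularEigenfunction W μ ψ)
    (hψ : ContDiffOn ℝ 1 ψ (Ioi 0)) (hW : ContinuousOn W (Ioi 0)) (hχ : ContDiff ℝ 1 χ)
    (hsupp : HasCompactSupport χ) (hpos : tsupport χ ⊆ Ioi 0) :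
    (∫ t in Ioi 0, t * deriv (fun s => χ s * ψ s) t ^ 2) -
        ∫ t in Ioi 0, t * W t * (χ t * ψ t) ^ 2 =
      μ * (∫ t in Ioi 0, (χ t * ψ t) ^ 2 / t) + ∫ t in Ioi 0, t * ψ t ^ 2 * deriv χ t ^ 2 := by
  set φ : ℝ → ℝ := fun t => χ t * ψ t with hφ
  have hφsupp : tsupport φ ⊆ tsupport χ := tsupport_mul_subset_left
  have hφ1 : ContDiff ℝ 1 φ := contDiff_of_contDiffOn_of_tsupport_subset isOpen_Ioi
    (hχ.contDiffOn.mul hψ) (hφsupp.trans hpos)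
  have hφc : HasCompactSupport φ := hsupp.mono' (subset_closure.trans hφsupp)
  have hgrad : Integrable fun t => t * deriv φ t ^ 2 :=
    integrable_mul_sq_of_hasCompactSupport hφc.deriv (hφ1.continuous_deriv le_rfl) continuousOn_id
  have hpot : Integrable fun t => t * W t * φ t ^ 2 :=
    integrable_mul_sq_of_hasCompactSupport hφc hφ1.continuous
      (continuousOn_id.mul (hW.mono (hφsupp.trans hpos)))
  have hmass : Integrable fun t => φ t ^ 2 / t :=
    integrable_sq_div_of_hasCompactSupport hφc hφ1.continuous (hφsupp.trans hpos)
  have hcut : Integrable fun t => t * ψ t ^ 2 * deriv χ t ^ 2 :=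
    integrable_mul_sq_of_hasCompactSupport hsupp.deriv (hχ.continuous_deriv le_rfl)
      (continuousOn_id.mul ((hψ.continuousOn.mono (tsupport_deriv_subset.trans hpos)).pow 2))
  have hleft : Integrable fun t => t * deriv φ t ^ 2 - t * W t * φ t ^ 2 := hgrad.sub hpot
  have hright : Integrable fun t => μ * (φ t ^ 2 / t) + t * ψ t ^ 2 * deriv χ t ^ 2 :=
    (hmass.const_mul μ).add hcut
  have hflux_supp : tsupport (fun s => χ s * (χ s * (s * deriv ψ s) * ψ s)) ⊆ tsupport χ :=
    tsupport_mul_subset_left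
  have hflux : ∫ t in Ioi 0, ((t * deriv φ t ^ 2 - t * W t * φ t ^ 2) -
      (μ * (φ t ^ 2 / t) + t * ψ t ^ 2 * deriv χ t ^ 2)) = 0 := by
    refine setIntegral_Ioi_zero_of_hasDerivAt_of_hasCompactSupport
      (hsupp.mono' (subset_closure.trans hflux_supp)) (hflux_supp.trans hpos) (fun t ht => ?_)
      (hleft.sub hright).integrableOn
    have hχt := (hχ.differentiable one_ne_zero t).hasDerivAt
    have hψt := ((hψ.differentiableOn one_ne_zero).differentiableAt (Ioi_mem_nhds ht)).hasDerivAt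
    rw [hφ, (hχt.fun_mul hψt).deriv]
    exact hasDerivAt_groundState_flux (ne_of_gt ht) hχt hψt rfl (heig t ht)
  rw [integral_sub hleft.integrableOn hright.integrableOn,
    integral_sub hgrad.integrableOn hpot.integrableOn,
    integral_add (hmass.const_mul μ).integrableOn hcut.integrableOn, integral_const_mul] at hflux
  exact sub_eq_zero.1 hflux

lemma singularRayleigh_logPullback_mul_le {f : ℝ → ℝ} {δ : ℝ} (hψ : ContDiffOn ℝ 1 ψ (Ioi 0))
    (hW : ContinuousOn W (Ioi 0)) (heig : IsSingularEigenfunction W μ ψ)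
    (hψint : IntegrableOn (fun t => ψ t ^ 2 / t) (Ioi 0))
    (hf : ContDiff ℝ 1 f) (hsupp : HasCompactSupport f) (hδ : ∀ x, |deriv f x| ≤ δ)
    (hmass : 0 < ∫ t in Ioi 0, (logPullback f t * ψ t) ^ 2 / t) :
    singularRayleigh W (fun t => logPullback f t * ψ t) ≤
      μ + δ ^ 2 * (∫ t in Ioi 0, ψ t ^ 2 / t) /
        ∫ t in Ioi 0, (logPullback f t * ψ t) ^ 2 / t := by
  have hcut : ∫ t in Ioi 0, t * ψ t ^ 2 * deriv (logPullback f) t ^ 2 ≤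
      δ ^ 2 * ∫ t in Ioi 0, ψ t ^ 2 / t := by
    rw [← integral_const_mul]
    refine integral_mono_of_nonneg ?_ (hψint.const_mul _) ?_ <;>
      filter_upwards [ae_restrict_mem measurableSet_Ioi] with t (ht : 0 < t)
    · simp only [Pi.zero_apply]
      positivity
    · calc t * ψ t ^ 2 * deriv (logPullback f) t ^ 2
          = |deriv f (log t)| ^ 2 * (ψ t ^ 2 / t) := by
            rw [(hasDerivAt_logPullback ht (hf.differentiable one_ne_zero _)).deriv, sq_abs]
            field_simp
        _ ≤ δ ^ 2 * (ψ t ^ 2 / t) := by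
            gcongr
            exact hδ _
  rw [singularRayleigh, heig.energy_mul_eq hψ hW (contDiff_logPullback hf hsupp)
    (hasCompactSupport_logPullback hsupp) (tsupport_logPullback_subset_Ioi hsupp), add_div,
    mul_div_cancel_right₀ _ hmass.ne']
  gcongr

lemma isAdmissible_logPullback_mul {f : ℝ → ℝ} (hψ : ContDiffOn ℝ ∞ ψ (Ioi 0))
    (hf : ContDiff ℝ ∞ f) (hsupp : HasCompactSupport f)
    (hmass : 0 < ∫ t in Ioi 0, (logPullback f t * ψ t) ^ 2 / t) :
    IsAdmissible (Ioi 0) fun t => logPullback f t * ψ t := by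
  have hsub : tsupport (fun t => logPullback f t * ψ t) ⊆ tsupport (logPullback f) :=
    tsupport_mul_subset_left
  have hpos := hsub.trans (tsupport_logPullback_subset_Ioi hsupp)
  refine ⟨contDiff_of_contDiffOn_of_tsupport_subset isOpen_Ioi ?_ hpos,
    (hasCompactSupport_logPullback hsupp).mono' (subset_closure.trans hsub), hpos, fun h => ?_⟩
  · exact (contDiff_logPullback hf hsupp).contDiffOn.mul hψ
  · have hzero : ∀ t, logPullback f t * ψ t = 0 := congrFun h
    simp [hzero] at hmass

lemma tendsto_setIntegral_logPullback_mul_sq_div (b : ContDiffBump (0 : ℝ))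
    (hψint : IntegrableOn (fun t => ψ t ^ 2 / t) (Ioi 0)) :
    Tendsto (fun R : ℝ => ∫ t in Ioi 0, (logPullback (fun x => b (R⁻¹ * x)) t * ψ t) ^ 2 / t) atTop
      (𝓝 (∫ t in Ioi 0, ψ t ^ 2 / t)) := by
  have hval : ∀ R : ℝ, ∀ t ∈ Ioi (0 : ℝ),
      (logPullback (fun x => b (R⁻¹ * x)) t * ψ t) ^ 2 / t =
        b (R⁻¹ * log t) ^ 2 * (ψ t ^ 2 / t) := fun R t ht => by
    rw [logPullback_of_pos _ ht]
    ring
  refine Tendsto.congr (fun R => (setIntegral_congr_fun measurableSet_Ioi (hval R)).symm) ?_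
  refine tendsto_integral_filter_of_dominated_convergence (fun t => ψ t ^ 2 / t)
    (Eventually.of_forall fun R => ?_) (Eventually.of_forall fun R => ?_) hψint
    (Eventually.of_forall fun t => ?_)
  · have hb : Measurable fun t => b (R⁻¹ * log t) :=
      b.continuous.measurable.comp (measurable_log.const_mul _)
    exact (hb.pow_const 2).aestronglyMeasurable.mul hψint.aestronglyMeasurable
  · filter_upwards [ae_restrict_mem measurableSet_Ioi] with t (ht : 0 < t)
    rw [Real.norm_of_nonneg (by positivity)]
    exact mul_le_of_le_one_left (by positivity) (pow_le_one₀ b.nonneg b.le_one)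
  · have harg : Tendsto (fun R : ℝ => R⁻¹ * log t) atTop (𝓝 0) := by
      simpa using tendsto_inv_atTop_zero.mul_const (log t)
    have hb : Tendsto (fun R : ℝ => b (R⁻¹ * log t)) atTop (𝓝 1) := by
      have := b.continuous.continuousAt.tendsto.comp harg
      rwa [b.one_of_mem_closedBall (Metric.mem_closedBall_self b.rIn_pos.le)] at this
    simpa using (hb.pow 2).mul_const (ψ t ^ 2 / t)

theorem exists_isAdmissible_singularRayleigh_lt (hψ : ContDiffOn ℝ ∞ ψ (Ioi 0))
    (hW : ContinuousOn W (Ioi 0)) (heig : IsSingularEigenfunction W μ ψ)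
    (hψint : IntegrableOn (fun t => ψ t ^ 2 / t) (Ioi 0))
    (hψpos : 0 < ∫ t in Ioi 0, ψ t ^ 2 / t) {c : ℝ} (hc : μ < c) :
    ∃ φ, IsAdmissible (Ioi 0) φ ∧ singularRayleigh W φ < c := by
  let b : ContDiffBump (0 : ℝ) := ⟨1, 2, one_pos, one_lt_two⟩
  obtain ⟨C, hC⟩ := b.hasCompactSupport.deriv.exists_bound_of_continuous
    ((b.contDiff (n := 1)).continuous_deriv le_rfl)
  set A := ∫ t in Ioi 0, ψ t ^ 2 / t
  set f : ℝ → ℝ → ℝ := fun R x => b (R⁻¹ * x)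
  set D : ℝ → ℝ := fun R => ∫ t in Ioi 0, (logPullback (f R) t * ψ t) ^ 2 / t
  have hD : Tendsto D atTop (𝓝 A) :=
    tendsto_setIntegral_logPullback_mul_sq_div b hψint
  have hbound : Tendsto (fun R => μ + (R⁻¹ * C) ^ 2 * A / D R) atTop (𝓝 μ) := by
    have hC0 : Tendsto (fun R : ℝ => R⁻¹ * C) atTop (𝓝 0) := by
      simpa using tendsto_inv_atTop_zero.mul_const C
    simpa using (((hC0.pow 2).mul_const A).div hD hψpos.ne').const_add μ
  obtain ⟨R, hR, hDR, hlt⟩ := ((eventually_gt_atTop (0 : ℝ)).and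
    ((hD.eventually_const_lt hψpos).and (hbound.eventually_lt_const hc))).exists
  have hf : ContDiff ℝ ∞ (f R) := b.contDiff.comp (by fun_prop)
  have hsupp : HasCompactSupport (f R) :=
    b.hasCompactSupport.comp_homeomorph (Homeomorph.mulLeft₀ R⁻¹ (inv_ne_zero hR.ne'))
  have hderiv : ∀ x, |deriv (f R) x| ≤ R⁻¹ * C := fun x => by
    rw [deriv_comp_mul_left, smul_eq_mul, abs_mul, abs_of_pos (inv_pos.2 hR)]
    exact mul_le_mul_of_nonneg_left (hC _) (inv_pos.2 hR).le
  exact ⟨_, isAdmissible_logPullback_mul hψ hf hsupp hDR,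
    (singularRayleigh_logPullback_mul_le (hψ.of_le (by norm_cast)) hW heig hψint
      (hf.of_le (by norm_cast)) hsupp hderiv hDR).trans_lt hlt⟩

end GroundState

section Liouville

/-- The exponential `e^V` of the limit profile `V t = log (64 / (8 + t²)²)`, which solves the
Liouville equation `(t V')' + t e^V = 0`; it is the limit of the rescaled potentials. -/
noncomputable def liouvillePotential (t : ℝ) : ℝ :=
  64 / (8 + t ^ 2) ^ 2

/-- The positive solution `ψ` of `(t ψ')' + t e^V ψ = ψ / t`, the first singular eigenfunction of
the linearized Liouville operator, with eigenvalue `-1`. -/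
noncomputable def liouvilleGroundState (t : ℝ) : ℝ :=
  t / (8 + t ^ 2)

lemma hasDerivAt_eight_add_sq (t : ℝ) : HasDerivAt (fun s : ℝ => 8 + s ^ 2) (2 * t) t := by
  simpa using (hasDerivAt_pow 2 t).const_add 8

lemma eight_add_sq_ne_zero (t : ℝ) : 8 + t ^ 2 ≠ 0 := by
  positivity

lemma liouvillePotential_pos (t : ℝ) : 0 < liouvillePotential t := by
  rw [liouvillePotential]
  positivity

lemma continuous_liouvillePotential : Continuous liouvillePotential :=
  continuous_const.div (by fun_prop) fun t => pow_ne_zero 2 (eight_add_sq_ne_zero t)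

lemma contDiff_liouvilleGroundState : ContDiff ℝ ∞ liouvilleGroundState :=
  contDiff_id.div (by fun_prop) eight_add_sq_ne_zero

lemma deriv_liouvilleGroundState (t : ℝ) :
    deriv liouvilleGroundState t = (8 - t ^ 2) / (8 + t ^ 2) ^ 2 := by
  refine (((hasDerivAt_id' t).fun_div (hasDerivAt_eight_add_sq t)
    (eight_add_sq_ne_zero t)).congr_deriv ?_).deriv
  ring

lemma isSingularEigenfunction_liouvilleGroundState :
    IsSingularEigenfunction liouvillePotential (-1) liouvilleGroundState := by
  intro t ht
  have ht0 : t ≠ 0 := ne_of_gt ht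
  have h8 : 8 + t ^ 2 ≠ 0 := eight_add_sq_ne_zero t
  have hnum : HasDerivAt (fun s : ℝ => s * (8 - s ^ 2)) (8 - 3 * t ^ 2) t :=
    ((hasDerivAt_id' t).fun_mul ((hasDerivAt_pow 2 t).const_sub 8)).congr_deriv (by ring)
  have hden := (hasDerivAt_eight_add_sq t).fun_pow 2
  simp only [deriv_liouvilleGroundState, ← mul_div_assoc]
  refine (hnum.fun_div hden (pow_ne_zero 2 h8)).congr_deriv ?_
  rw [liouvillePotential, liouvilleGroundState]
  field_simp
  ring

lemma hasDerivAt_liouvilleGroundState_sq_div (t : ℝ) :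
    HasDerivAt (fun s : ℝ => -(1 / 2) * (8 + s ^ 2)⁻¹) (liouvilleGroundState t ^ 2 / t) t := by
  have h8 : 8 + t ^ 2 ≠ 0 := eight_add_sq_ne_zero t
  refine (((hasDerivAt_eight_add_sq t).fun_inv h8).const_mul _).congr_deriv ?_
  rw [liouvilleGroundState]
  rcases eq_or_ne t 0 with rfl | ht
  · simp
  · field_simp

lemma tendsto_neg_half_mul_inv_eight_add_sq :
    Tendsto (fun s : ℝ => -(1 / 2) * (8 + s ^ 2)⁻¹) atTop (𝓝 0) := by
  have : Tendsto (fun s : ℝ => 8 + s ^ 2) atTop atTop :=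
    tendsto_atTop_add_const_left _ _ (tendsto_pow_atTop two_ne_zero)
  simpa only [Pi.inv_apply, mul_zero] using this.inv_tendsto_atTop.const_mul (-(1 / 2))

lemma liouvilleGroundState_sq_div_nonneg {t : ℝ} (ht : t ∈ Ioi 0) :
    0 ≤ liouvilleGroundState t ^ 2 / t :=
  div_nonneg (sq_nonneg _) ht.le

lemma integrableOn_liouvilleGroundState_sq_div :
    IntegrableOn (fun t => liouvilleGroundState t ^ 2 / t) (Ioi 0) :=
  integrableOn_Ioi_deriv_of_nonneg' (fun t _ => hasDerivAt_liouvilleGroundState_sq_div t)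
    (fun _ ht => liouvilleGroundState_sq_div_nonneg ht) tendsto_neg_half_mul_inv_eight_add_sq

lemma setIntegral_liouvilleGroundState_sq_div :
    ∫ t in Ioi 0, liouvilleGroundState t ^ 2 / t = 1 / 16 := by
  rw [integral_Ioi_of_hasDerivAt_of_nonneg' (fun t _ => hasDerivAt_liouvilleGroundState_sq_div t)
    (fun _ ht => liouvilleGroundState_sq_div_nonneg ht) tendsto_neg_half_mul_inv_eight_add_sq]
  norm_num

lemma exists_isAdmissible_singularRayleigh_liouvillePotential_lt {c : ℝ} (hc : -1 < c) :
    ∃ φ, IsAdmissible (Ioi 0) φ ∧ singularRayleigh liouvillePotential φ < c :=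
  exists_isAdmissible_singularRayleigh_lt contDiff_liouvilleGroundState.contDiffOn
    continuous_liouvillePotential.continuousOn isSingularEigenfunction_liouvilleGroundState
    integrableOn_liouvilleGroundState_sq_div
    (by rw [setIntegral_liouvilleGroundState_sq_div]; norm_num) hc

end Liouville

section Power

lemma abs_rpow_sub_one_le_exp {p : ℝ} (hp : 1 ≤ p) (r : ℝ) :
    |r| ^ (p - 1) ≤ exp |p * (r - 1)| :=
  calc |r| ^ (p - 1) ≤ exp |r - 1| ^ (p - 1) := by
        gcongr
        calc |r| = |(r - 1) + 1| := by rw [sub_add_cancel]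
          _ ≤ |r - 1| + 1 := by simpa using abs_add_le (r - 1) 1
          _ ≤ exp |r - 1| := add_one_le_exp _
    _ = exp (|r - 1| * (p - 1)) := (exp_mul _ _).symm
    _ ≤ exp |p * (r - 1)| := by
        rw [abs_mul, abs_of_nonneg (zero_le_one.trans hp), mul_comm]
        gcongr
        exact sub_le_self p zero_le_one

lemma tendsto_abs_rpow_sub_one {r : ℝ → ℝ} {L : ℝ}
    (hr : Tendsto (fun p => p * (r p - 1)) atTop (𝓝 L)) :
    Tendsto (fun p => |r p| ^ (p - 1)) atTop (𝓝 (exp L)) := by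
  have hr1 : Tendsto r atTop (𝓝 1) := by
    have h := (hr.mul tendsto_inv_atTop_zero).add_const 1
    rw [mul_zero, zero_add] at h
    refine h.congr' ?_
    filter_upwards [eventually_ne_atTop 0] with p hp
    field_simp
    ring
  have hexp := (tendsto_one_add_rpow_exp_of_tendsto hr).div hr1 one_ne_zero
  rw [div_one] at hexp
  refine hexp.congr' ?_
  filter_upwards [hr1.eventually_const_lt one_pos] with p hp
  rw [abs_of_pos hp, rpow_sub_one hp.ne', Pi.div_apply, add_sub_cancel]

lemma exists_eventually_abs_rpow_sub_one_le {r : ℝ → ℝ → ℝ} {V : ℝ → ℝ} {K : Set ℝ}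
    (hK : IsCompact K) (hV : ContinuousOn V K)
    (hr : TendstoUniformlyOn (fun p t => p * (r p t - 1)) V atTop K) :
    ∃ M, ∀ᶠ p in atTop, ∀ t ∈ K, |r p t| ^ (p - 1) ≤ M := by
  obtain ⟨C, hC⟩ := hK.exists_bound_of_continuousOn hV
  refine ⟨exp (C + 1), ?_⟩
  filter_upwards [eventually_ge_atTop 1, Metric.tendstoUniformlyOn_iff.1 hr 1 one_pos]
    with p hp hclose t ht
  refine (abs_rpow_sub_one_le_exp hp _).trans (exp_le_exp.2 ?_)
  have hdist := hclose t ht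
  rw [dist_eq_norm] at hdist
  exact (norm_le_norm_add_norm_sub (V t) _).trans (add_le_add (hC t ht) hdist.le)

end Power

section LaneEmden

lemma isAdmissible_Ioo_iff {φ : ℝ → ℝ} :
    IsAdmissible (Ioo 0 1) φ ↔ ContDiff ℝ ∞ φ ∧ tsupport φ ⊆ Ioo 0 1 ∧ φ ≠ 0 :=
  ⟨fun h => ⟨h.contDiff, h.tsupport_subset, h.ne_zero⟩, fun ⟨hd, hs, h0⟩ =>
    ⟨hd, isCompact_Icc.of_isClosed_subset (isClosed_tsupport φ) (hs.trans Ioo_subset_Icc_self),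
      hs, h0⟩⟩

lemma firstSingularEigenvalue_const_mul_eq_sInf (p : ℝ) (W : ℝ → ℝ) :
    firstSingularEigenvalue (fun t => p * W t) = sInf {x : ℝ | ∃ φ : ℝ → ℝ,
      ContDiff ℝ ∞ φ ∧ tsupport φ ⊆ Ioo (0 : ℝ) 1 ∧ φ ≠ 0 ∧
      x = ((∫ t in Ioo (0 : ℝ) 1, t * deriv φ t ^ 2) -
            p * ∫ t in Ioo (0 : ℝ) 1, t * W t * φ t ^ 2) /
          (∫ t in Ioo (0 : ℝ) 1, φ t ^ 2 / t)} := by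
  have hquot {φ : ℝ → ℝ} (hφ : tsupport φ ⊆ Ioo 0 1) :
      singularRayleigh (fun t => p * W t) φ = ((∫ t in Ioo (0 : ℝ) 1, t * deriv φ t ^ 2) -
        p * ∫ t in Ioo (0 : ℝ) 1, t * W t * φ t ^ 2) / ∫ t in Ioo (0 : ℝ) 1, φ t ^ 2 / t := by
    simp only [singularRayleigh_eq_setIntegral_Ioo _ hφ, mul_left_comm _ p, mul_assoc p,
      integral_const_mul]
  rw [firstSingularEigenvalue]
  congr 1
  ext x
  simp only [mem_image, mem_ofPred_eq, isAdmissible_Ioo_iff]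
  constructor
  · rintro ⟨φ, ⟨hd, hs, h0⟩, rfl⟩
    exact ⟨φ, hd, hs, h0, hquot hs⟩
  · rintro ⟨φ, hd, hs, h0, rfl⟩
    exact ⟨φ, ⟨hd, hs, h0⟩, hquot hs⟩

lemma sq_mul_abs_rpow_eq_abs_div_rpow {p a e : ℝ} (hp : 0 < p) (ha : 0 < a)
    (he : e = (p * a ^ (p - 1)) ^ (-(1 / 2) : ℝ)) (x : ℝ) :
    e ^ 2 * (p * |x| ^ (p - 1)) = |x / a| ^ (p - 1) := by
  have hbase : 0 < p * a ^ (p - 1) := by positivity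
  have hsq : e ^ 2 = (p * a ^ (p - 1))⁻¹ := by
    rw [he, ← rpow_natCast, ← rpow_mul hbase.le, ← rpow_neg_one]
    norm_num
  rw [hsq, abs_div, abs_of_pos ha, div_rpow (abs_nonneg x) ha.le]
  field_simp

lemma eventually_firstSingularEigenvalue_rpow_lt {v : ℝ → ℝ → ℝ} {ε V φ : ℝ → ℝ}
    (hcont : ∀ p : ℝ, 1 < p → ContinuousOn (v p) (Icc 0 1)) (hpos : ∀ p : ℝ, 1 < p → 0 < v p 0)
    (hε : ∀ p : ℝ, 1 < p → ε p = (p * v p 0 ^ (p - 1)) ^ (-(1 / 2) : ℝ))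
    (hε0 : Tendsto ε atTop (𝓝 0)) (hφ : IsAdmissible (Ioi 0) φ) (hV : ContinuousOn V (tsupport φ))
    (hconv : TendstoUniformlyOn (fun p t => p * (v p (ε p * t) - v p 0) / v p 0) V atTop
      (tsupport φ)) {c : ℝ} (hc : singularRayleigh (fun t => exp (V t)) φ < c) :
    ∀ᶠ p in atTop, firstSingularEigenvalue (fun t => p * |v p t| ^ (p - 1)) < c := by
  have hp1 : ∀ᶠ p : ℝ in atTop, 1 < p := eventually_gt_atTop 1
  have hεpos : ∀ᶠ p in atTop, 0 < ε p := hp1.mono fun p hp => by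
    have hv0 := hpos p hp
    rw [hε p hp]
    positivity
  have hWcont : ∀ᶠ p in atTop, ContinuousOn (fun t => p * |v p t| ^ (p - 1)) (Icc 0 1) :=
    hp1.mono fun p hp => continuousOn_const.mul
      ((hcont p hp).abs.rpow_const fun _ _ => Or.inr (sub_nonneg.2 hp.le))
  set r : ℝ → ℝ → ℝ := fun p s => v p (ε p * s) / v p 0
  have hresc : ∀ᶠ p in atTop, ∀ s, |r p s| ^ (p - 1) = ε p ^ 2 * (p * |v p (ε p * s)| ^ (p - 1)) :=
    hp1.mono fun p hp s => (sq_mul_abs_rpow_eq_abs_div_rpow (by positivity) (hpos p hp)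
      (hε p hp) _).symm
  have hr : TendstoUniformlyOn (fun p s => p * (r p s - 1)) V atTop (tsupport φ) := by
    refine hconv.congr (hp1.mono fun p hp s _ => ?_)
    simp only [r, mul_div_assoc, sub_div, div_self (hpos p hp).ne']
  obtain ⟨M, hM⟩ := exists_eventually_abs_rpow_sub_one_le hφ.hasCompactSupport hV hr
  refine eventually_firstSingularEigenvalue_lt hε0 hεpos hWcont hφ (M := M) ?_
    (fun s hs => ?_) hc
  · filter_upwards [hM, hresc] with p hMp hrescp s hs
    rw [← hrescp, abs_of_nonneg (by positivity)]
    exact hMp s hs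
  · exact (tendsto_abs_rpow_sub_one (hr.tendsto_at hs)).congr' (hresc.mono fun p hp => hp s)

theorem laneEmden_first_singular_eigenvalue_limit_general
    (v : ℝ → ℝ → ℝ) (ν : ℝ → ℝ) (ε : ℝ → ℝ)
    (hcont : ∀ p : ℝ, 1 < p → ContinuousOn (v p) (Icc 0 1))
    (hpos : ∀ p : ℝ, 1 < p → 0 < v p 0)
    (hν : ∀ p : ℝ, 1 < p → ν p = firstSingularEigenvalue fun t => p * |v p t| ^ (p - 1))
    (hε : ∀ p : ℝ, 1 < p → ε p = (p * v p 0 ^ (p - 1)) ^ (-(1 / 2) : ℝ))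
    (hε0 : Tendsto ε atTop (𝓝 0))
    (hconv : ∀ K : Set ℝ, IsCompact K → K ⊆ Ioi 0 →
      TendstoUniformlyOn (fun p t => p * (v p (ε p * t) - v p 0) / v p 0)
        (fun t => log (64 / (8 + t ^ 2) ^ 2)) atTop K)
    (hbound : ∀ p : ℝ, 1 < p → -1 ≤ ν p) :
    Tendsto ν atTop (𝓝 (-1)) := by
  have hp1 : ∀ᶠ p : ℝ in atTop, 1 < p := eventually_gt_atTop 1
  refine tendsto_order.2 ⟨fun a ha => hp1.mono fun p hp => ha.trans_le (hbound p hp),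
    fun c hc => ?_⟩
  obtain ⟨φ, hφ, hφc⟩ := exists_isAdmissible_singularRayleigh_liouvillePotential_lt hc
  have hlt := eventually_firstSingularEigenvalue_rpow_lt hcont hpos hε hε0 hφ
    (V := fun t => log (liouvillePotential t))
    (continuous_liouvillePotential.log fun t => (liouvillePotential_pos t).ne').continuousOn
    (hconv _ hφ.hasCompactSupport hφ.tsupport_subset)
    (by simpa only [exp_log (liouvillePotential_pos _)] using hφc)
  filter_upwards [hlt, hp1] with p hlt hp using (hν p hp).trans_lt hlt

end LaneEmden

/-- For the positive radial least-energy solution `v_p` of the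
one-dimensional Lane–Emden problem, the first singular radial eigenvalue
`ν₁(p)` (defined by the Rayleigh-quotient infimum over test functions
`φ ∈ C_c^∞((0,1))`) tends to `−1` as `p → ∞`. -/
theorem laneEmden_first_singular_eigenvalue_limit
    (v : ℝ → ℝ → ℝ) (ν : ℝ → ℝ) (ε : ℝ → ℝ)
    (hreg1 : ∀ p : ℝ, 1 < p → ContDiffOn ℝ 1 (v p) (Icc 0 1))
    (hreg2 : ∀ p : ℝ, 1 < p → ContDiffOn ℝ 2 (v p) (Ioo 0 1))
    (heq : ∀ p : ℝ, 1 < p → ∀ t ∈ Ioo (0:ℝ) 1,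
      deriv (fun s => s * deriv (v p) s) t + t * |v p t| ^ (p - 1) * v p t = 0)
    (hderiv0 : ∀ p : ℝ, 1 < p → deriv (v p) 0 = 0)
    (hbdry : ∀ p : ℝ, 1 < p → v p 1 = 0)
    (hpos : ∀ p : ℝ, 1 < p → ∀ t ∈ Ico (0:ℝ) 1, 0 < v p t)
    (hν : ∀ p : ℝ, ν p = sInf {x : ℝ | ∃ φ : ℝ → ℝ,
      ContDiff ℝ (⊤ : ℕ∞) φ ∧ tsupport φ ⊆ Ioo (0:ℝ) 1 ∧ φ ≠ 0 ∧
      x = ((∫ t in Ioo (0:ℝ) 1, t * deriv φ t ^ 2) -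
            p * ∫ t in Ioo (0:ℝ) 1, t * |v p t| ^ (p - 1) * φ t ^ 2) /
          (∫ t in Ioo (0:ℝ) 1, φ t ^ 2 / t)})
    (hε : ∀ p : ℝ, ε p = (p * v p 0 ^ (p - 1)) ^ (-(1 / 2) : ℝ))
    (hε0 : Tendsto ε atTop (nhds 0))
    (hconv : ∀ K : Set ℝ, IsCompact K → K ⊆ Ici 0 →
      TendstoUniformlyOn (fun p t => p * (v p (ε p * t) - v p 0) / v p 0)
        (fun t => Real.log (64 / (8 + t ^ 2) ^ 2)) atTop K)
    (hbound : ∀ p : ℝ, 1 < p → -1 < ν p ∧ ν p < 0) :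
    Tendsto ν atTop (nhds (-1)) :=
  laneEmden_first_singular_eigenvalue_limit_general v ν ε
    (fun p hp => (hreg1 p hp).continuousOn) (fun p hp => hpos p hp 0 (by simp))
    (fun p _ => (hν p).trans (firstSingularEigenvalue_const_mul_eq_sInf p _).symm)
    (fun p _ => hε p) hε0 (fun K hK hK0 => hconv K hK (hK0.trans Ioi_subset_Ici_self))
    fun p hp => (hbound p hp).1.le
end

section
/- Define η₁(r) := 4r/(8+r²) for r > 0. Then: (i) (r·η₁′(r))′ + r·( 64/(8+r²)² − 1/r² )·η₁(r) = 0 for all r > 0; (ii) ∫₀^∞ r^{−1}·η₁(r)² dr = 1; (iii) ∫₀^∞ r·η₁′(r)² dr < ∞. (Thus η₁ is a normalized eigenfunction of the limit singular eigenvalue problem −(rη′)′ = r(W¹ + β/r²)η, W¹(r) = 64/(8+r²)², corresponding to the eigenvalue β = −1.) -/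
open Real Set Filter MeasureTheory

/-!
The function `η₁ = 4r/(8+r²)` is `-V'` for the Liouville bubble `V = log (64/(8+r²)²)`. Dividing the
radial equation `-(rV')' = r e^V` by `r` and differentiating it yields the linearised equation for
`V'`, and the commutator of `d/dr` with the radial Laplacian is the angular term `-1/r²`: this is
the eigenvalue `-1`. Moreover `rη₁` is the mass `∫₀ʳ s e^{V(s)} ds`, which tends to `4`, while
`η₁²/r` is a quarter of the mass density `r e^V`; so `∫ η₁²/r = 1`. The Dirichlet energy is finite
because `|rη₁'| ≤ |η₁|`.
-/

open scoped Topology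

section RadialEquation

variable {𝕜 : Type*} [NontriviallyNormedField 𝕜] {f V η : 𝕜 → 𝕜} {f' m r : 𝕜}

theorem hasDerivAt_of_hasDerivAt_id_mul (hr : r ≠ 0)
    (h : HasDerivAt (fun s => s * η s) m r) : HasDerivAt η ((m - η r) / r) r := by
  have hdiv : HasDerivAt (fun s => s * η s / s) ((m - η r) / r) r :=
    (h.fun_div (hasDerivAt_id' r) hr).congr_deriv (by field_simp)
  refine hdiv.congr_of_eventuallyEq ?_
  filter_upwards [eventually_ne_nhds hr] with s hs
  exact (mul_div_cancel_left₀ (η s) hs).symm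

theorem id_mul_deriv_of_hasDerivAt_id_mul (hr : r ≠ 0)
    (h : HasDerivAt (fun s => s * η s) m r) : r * deriv η r = m - η r := by
  rw [(hasDerivAt_of_hasDerivAt_id_mul hr h).deriv, mul_div_cancel₀ _ hr]

-- With `η = -V'`, the hypothesis `hη` is the radial equation `-(rV')' = r f(V)`.
theorem hasDerivAt_id_mul_deriv_of_radial_equation (hr : r ≠ 0) (hV : HasDerivAt V (-η r) r)
    (hη : ∀ᶠ x in 𝓝 r, HasDerivAt (fun s => s * η s) (x * f (V x)) x)
    (hf : HasDerivAt f f' (V r)) :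
    HasDerivAt (fun x => x * deriv η x) (-(r * (f' - 1 / r ^ 2) * η r)) r := by
  have hflux : (fun x => x * deriv η x) =ᶠ[𝓝 r] fun x => x * f (V x) - η x := by
    filter_upwards [hη, eventually_ne_nhds hr] with x hx hx0
    exact id_mul_deriv_of_hasDerivAt_id_mul hx0 hx
  have hsource : HasDerivAt (fun x => x * f (V x)) (1 * f (V r) + r * (f' * -η r)) r :=
    (hasDerivAt_id' r).fun_mul (hf.comp r hV)
  have hη' := hasDerivAt_of_hasDerivAt_id_mul hr hη.self_of_nhds
  refine ((hsource.fun_sub hη').congr_of_eventuallyEq hflux).congr_deriv ?_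
  field_simp
  ring

end RadialEquation

theorem integrableOn_mul_deriv_sq_of_abs_mul_deriv_le {η : ℝ → ℝ}
    (hint : IntegrableOn (fun x => η x ^ 2 / x) (Ioi 0))
    (hle : ∀ x > 0, |x * deriv η x| ≤ |η x|) :
    IntegrableOn (fun x => x * deriv η x ^ 2) (Ioi 0) := by
  refine hint.mono'
    (measurable_id.mul ((measurable_deriv η).pow_const 2)).aestronglyMeasurable ?_
  refine ae_restrict_of_forall_mem measurableSet_Ioi fun x (hx : 0 < x) => ?_
  calc ‖x * deriv η x ^ 2‖ = (x * deriv η x) ^ 2 / x := by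
        rw [norm_of_nonneg (by positivity)]
        field_simp
    _ ≤ η x ^ 2 / x := div_le_div_of_nonneg_right (sq_le_sq.2 (hle x hx)) hx.le

/-- The radial solutions of the Liouville equation `-ΔV = e^V` in the plane, parametrised by the
squared length scale `a > 0`; the normalisation `V(0) = 0` is `a = 8`. -/
noncomputable def liouvilleBubble (a r : ℝ) : ℝ := log (8 * a / (a + r ^ 2) ^ 2)

/-- The radial profile `-∂ᵣV` of the derivatives of the Liouville bubble `V` under translations of
the plane; these derivatives are the profile times `cos θ` or `sin θ`. -/
noncomputable def translationMode (a r : ℝ) : ℝ := 4 * r / (a + r ^ 2)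

section LiouvilleBubble

variable {a r : ℝ}

theorem hasDerivAt_const_add_sq (a r : ℝ) : HasDerivAt (fun x : ℝ => a + x ^ 2) (2 * r) r := by
  simpa using (hasDerivAt_pow 2 r).const_add a

theorem exp_liouvilleBubble (ha : 0 < a) (r : ℝ) :
    exp (liouvilleBubble a r) = 8 * a / (a + r ^ 2) ^ 2 :=
  exp_log (by positivity)

theorem hasDerivAt_liouvilleBubble (ha : 0 < a) (r : ℝ) :
    HasDerivAt (liouvilleBubble a) (-translationMode a r) r := by
  have hsplit : liouvilleBubble a = fun x => log (8 * a) - 2 * log (a + x ^ 2) := by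
    funext x
    rw [liouvilleBubble, log_div (by positivity) (by positivity), log_pow, Nat.cast_ofNat]
  have hlog := (hasDerivAt_const_add_sq a r).log (by positivity)
  rw [hsplit]
  refine ((hlog.const_mul 2).const_sub (log (8 * a))).congr_deriv ?_
  rw [translationMode]
  ring

theorem id_mul_translationMode (ha : 0 < a) (r : ℝ) :
    r * translationMode a r = 4 - 4 * a / (a + r ^ 2) := by
  rw [translationMode]
  field_simp
  ring

theorem hasDerivAt_id_mul_translationMode (ha : 0 < a) (r : ℝ) :
    HasDerivAt (fun s => s * translationMode a s) (r * exp (liouvilleBubble a r)) r := by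
  rw [funext (id_mul_translationMode ha), exp_liouvilleBubble ha]
  have hdiv := (hasDerivAt_const r (4 * a)).fun_div (hasDerivAt_const_add_sq a r) (by positivity)
  exact (hdiv.const_sub 4).congr_deriv (by ring)

theorem tendsto_id_mul_translationMode (ha : 0 < a) :
    Tendsto (fun r => r * translationMode a r) atTop (𝓝 4) := by
  have hden : Tendsto (fun r : ℝ => a + r ^ 2) atTop atTop :=
    tendsto_atTop_add_const_left _ _ (tendsto_pow_atTop two_ne_zero)
  rw [funext (id_mul_translationMode ha)]
  simpa using (hden.const_div_atTop (4 * a)).const_sub 4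

theorem integrableOn_id_mul_exp_liouvilleBubble (ha : 0 < a) :
    IntegrableOn (fun r => r * exp (liouvilleBubble a r)) (Ioi 0) :=
  integrableOn_Ioi_deriv_of_nonneg' (fun r _ => hasDerivAt_id_mul_translationMode ha r)
    (fun _ hr => mul_nonneg (le_of_lt hr) (exp_pos _).le) (tendsto_id_mul_translationMode ha)

theorem integral_id_mul_exp_liouvilleBubble (ha : 0 < a) :
    ∫ r in Ioi 0, r * exp (liouvilleBubble a r) = 4 := by
  rw [integral_Ioi_of_hasDerivAt_of_tendsto' (fun r _ => hasDerivAt_id_mul_translationMode ha r)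
    (integrableOn_id_mul_exp_liouvilleBubble ha) (tendsto_id_mul_translationMode ha),
    zero_mul, sub_zero]

theorem translationMode_sq_div (ha : 0 < a) (r : ℝ) :
    translationMode a r ^ 2 / r = 2 / a * (r * exp (liouvilleBubble a r)) := by
  rw [translationMode, exp_liouvilleBubble ha]
  field_simp
  ring

theorem integrableOn_translationMode_sq_div (ha : 0 < a) :
    IntegrableOn (fun r => translationMode a r ^ 2 / r) (Ioi 0) := by
  simp only [translationMode_sq_div ha]
  exact (integrableOn_id_mul_exp_liouvilleBubble ha).const_mul (2 / a)

theorem integral_translationMode_sq_div (ha : 0 < a) :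
    ∫ r in Ioi 0, translationMode a r ^ 2 / r = 8 / a := by
  simp only [translationMode_sq_div ha]
  rw [integral_const_mul, integral_id_mul_exp_liouvilleBubble ha]
  ring

theorem hasDerivAt_id_mul_deriv_translationMode (ha : 0 < a) (hr : r ≠ 0) :
    HasDerivAt (fun x => x * deriv (translationMode a) x)
      (-(r * (8 * a / (a + r ^ 2) ^ 2 - 1 / r ^ 2) * translationMode a r)) r := by
  rw [← exp_liouvilleBubble ha]
  exact hasDerivAt_id_mul_deriv_of_radial_equation hr (hasDerivAt_liouvilleBubble ha r)
    (.of_forall (hasDerivAt_id_mul_translationMode ha)) (hasDerivAt_exp _)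

theorem id_mul_deriv_translationMode (ha : 0 < a) (hr : r ≠ 0) :
    r * deriv (translationMode a) r = (a - r ^ 2) / (a + r ^ 2) * translationMode a r := by
  rw [id_mul_deriv_of_hasDerivAt_id_mul hr (hasDerivAt_id_mul_translationMode ha r),
    exp_liouvilleBubble ha, translationMode]
  field_simp
  ring

theorem abs_id_mul_deriv_translationMode_le (ha : 0 < a) (hr : r ≠ 0) :
    |r * deriv (translationMode a) r| ≤ |translationMode a r| := by
  have hratio : |(a - r ^ 2) / (a + r ^ 2)| ≤ 1 := by
    rw [abs_div, abs_of_pos (by positivity : 0 < a + r ^ 2), div_le_one (by positivity), abs_le]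
    constructor <;> linarith [sq_nonneg r]
  rw [id_mul_deriv_translationMode ha hr, abs_mul]
  exact mul_le_of_le_one_left (abs_nonneg _) hratio

end LiouvilleBubble

/-- The function `η₁(r) = 4r/(8+r²)` is a normalized eigenfunction of
the limit singular eigenvalue problem `−(rη′)′ = r(W¹ + β/r²)η`, `W¹(r) = 64/(8+r²)²`,
corresponding to `β = −1`: it solves the equation, has `∫₀^∞ η₁²/r dr = 1` and finite
weighted Dirichlet energy. -/
theorem limit_problem_first_eigenfunction
    (η₁ : ℝ → ℝ) (hη₁ : ∀ r : ℝ, η₁ r = 4 * r / (8 + r ^ 2)) :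
    (∀ r > (0:ℝ),
      deriv (fun x => x * deriv η₁ x) r +
        r * (64 / (8 + r ^ 2) ^ 2 - 1 / r ^ 2) * η₁ r = 0) ∧
    (∫ r in Ioi (0:ℝ), η₁ r ^ 2 / r) = 1 ∧
    IntegrableOn (fun r => r * deriv η₁ r ^ 2) (Ioi 0) := by
  obtain rfl : η₁ = translationMode 8 := funext hη₁
  have ha : (0 : ℝ) < 8 := by norm_num
  refine ⟨fun r hr => ?equation, ?normalization, ?energy⟩
  case equation =>
    rw [(hasDerivAt_id_mul_deriv_translationMode ha hr.ne').deriv]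
    ring
  case normalization =>
    rw [integral_translationMode_sq_div ha, div_self ha.ne']
  case energy =>
    exact integrableOn_mul_deriv_sq_of_abs_mul_deriv_le (integrableOn_translationMode_sq_div ha)
      fun r hr => abs_id_mul_deriv_translationMode_le ha hr.ne'
end
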